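/- arXiv:2403.17262 — 6 statements merged into one kernel-verified Lean document; each statement's English description precedes it below -/
import Mathlib

section
/- Let F, U ⊂ ℝⁿ be nonempty finite sets with 0 in the interior of conv U (and n ≥ 1). Then sup{c ∈ (0,1) : (−(c/(1−c))·conv F) ∩ conv U ≠ ∅} equals 1 if 0 ∈ conv F, and equals [1 − min_{|ν|=1} h_F(ν)/h_U(ν)]^{−1} if 0 ∉ conv F (the minimum being over unit vectors ν, where h_U(ν) > 0 for all such ν). -/
open scoped RealInnerProductSpace Pointwise

/-!
Let `K` and `L` be bounded convex sets, `K` nonempty and `0` interior to `L`, so that `h_L ν > 0`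
for `ν ≠ 0`. Whether `-s • K` meets `L`, for `s > 0`, is read off from support functions: a common
point forces `0 ≤ s * h_K ν + h_L ν`, that is `-s⁻¹ ≤ h_K ν / h_L ν`, for every `ν ≠ 0`, while if
`-s • K` and `L` are disjoint, a separating hyperplane has a normal `ν` with
`h_K ν / h_L ν ≤ -s⁻¹`. Under the substitution `s = c / (1 - c)` the threshold `-s⁻¹` is `1 - c⁻¹`.
If `0 ∉ closure K`, separating `0` from `closure K` shows that `m := inf h_K / h_L` is negative, so
the parameters `c` fill the interval from `0` to `(1 - m)⁻¹ < 1`, possibly without its right end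
point. If `0 ∈ closure K`, some point of `K` is so close to `0` that its dilate lies in `L`, and all
`c ∈ (0, 1)` occur.
-/

section SupportFunction

variable {E : Type*} [NormedAddCommGroup E] [InnerProductSpace ℝ E] {A : Set E} {a y : E} {r : ℝ}

/-- The support function `h_A` of a set `A`. It is real-valued, so it has its usual meaning only
if `A` is nonempty and bounded. -/
noncomputable def supportFun (A : Set E) (y : E) : ℝ :=
  sSup ((fun a => ⟪a, y⟫) '' A)

theorem inner_le_supportFun (hA : Bornology.IsBounded A) (ha : a ∈ A) :
    ⟪a, y⟫ ≤ supportFun A y := by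
  have hbdd : BddAbove ((fun a => ⟪a, y⟫) '' A) :=
    ((innerSLFlip ℝ y).lipschitz.isBounded_image hA).bddAbove
  exact le_csSup hbdd (Set.mem_image_of_mem _ ha)

theorem supportFun_le (hA : A.Nonempty) (h : ∀ a ∈ A, ⟪a, y⟫ ≤ r) : supportFun A y ≤ r :=
  csSup_le (hA.image _) (Set.forall_mem_image.mpr h)

theorem supportFun_smul_of_nonneg (A : Set E) (y : E) (hr : 0 ≤ r) :
    supportFun A (r • y) = r * supportFun A y := by
  simp only [supportFun, real_inner_smul_right]
  rw [← smul_eq_mul, ← Real.sSup_smul_of_nonneg hr, ← Set.image_smul, Set.image_image]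
  rfl

theorem supportFun_convexHull_coe (F : Finset E) (hF : F.Nonempty) (y : E) :
    supportFun (convexHull ℝ (F : Set E)) y = F.sup' hF fun a => ⟪a, y⟫ := by
  have hconv : ConvexOn ℝ Set.univ fun a : E => ⟪a, y⟫ :=
    ((innerₗ E).flip y).convexOn convex_univ
  have hbdd : Bornology.IsBounded (convexHull ℝ (F : Set E)) :=
    isBounded_convexHull.mpr F.finite_toSet.isBounded
  apply le_antisymm
  · exact supportFun_le hF.to_set.convexHull fun a ha =>
      hconv.le_sup_of_mem_convexHull (Set.subset_univ _) ha
  · exact Finset.sup'_le hF _ fun a ha => inner_le_supportFun hbdd (subset_convexHull ℝ _ ha)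

theorem exists_pos_smul_mem_of_zero_mem_interior (hA : 0 ∈ interior A) (y : E) :
    ∃ t : ℝ, 0 < t ∧ t • y ∈ A := by
  have hnear : ∀ᶠ t : ℝ in nhds 0, t • y ∈ A :=
    (continuous_id.smul continuous_const).continuousAt.eventually_mem
      (by simpa using mem_interior_iff_mem_nhds.mp hA)
  have hright : ∀ᶠ t : ℝ in nhdsWithin 0 (Set.Ioi 0), 0 < t ∧ t • y ∈ A :=
    eventually_mem_nhdsWithin.and (hnear.filter_mono nhdsWithin_le_nhds)
  exact hright.exists

theorem supportFun_pos (hA : Bornology.IsBounded A) (h0 : 0 ∈ interior A) (hy : y ≠ 0) :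
    0 < supportFun A y := by
  obtain ⟨t, ht, hty⟩ := exists_pos_smul_mem_of_zero_mem_interior h0 y
  calc
    0 < t * ⟪y, y⟫ := mul_pos ht (real_inner_self_pos.mpr hy)
    _ = ⟪t • y, y⟫ := (real_inner_smul_left y y t).symm
    _ ≤ supportFun A y := inner_le_supportFun hA hty

end SupportFunction

section SupportRatios

variable {E : Type*} [NormedAddCommGroup E] [InnerProductSpace ℝ E] {K L : Set E} {ν : E}
  {r s : ℝ}

/-- The ratios `h_K ν / h_L ν` of support functions over unit vectors `ν`. Their infimum `m` bounds
the dilations under which `-s • K` meets `L`, by `s ≤ (-m)⁻¹` if `m < 0`. -/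
def supportRatios (K L : Set E) : Set ℝ :=
  {r | ∃ ν : E, ‖ν‖ = 1 ∧ r = supportFun K ν / supportFun L ν}

theorem div_mem_supportRatios (K L : Set E) (hν : ν ≠ 0) :
    supportFun K ν / supportFun L ν ∈ supportRatios K L := by
  refine ⟨‖ν‖⁻¹ • ν, norm_smul_inv_norm (𝕜 := ℝ) hν, ?_⟩
  have hpos : 0 < ‖ν‖⁻¹ := inv_pos.mpr (norm_pos_iff.mpr hν)
  rw [supportFun_smul_of_nonneg _ _ hpos.le, supportFun_smul_of_nonneg _ _ hpos.le,
    mul_div_mul_left _ _ hpos.ne']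

theorem neg_inv_le_of_mem_supportRatios (hK : Bornology.IsBounded K) (hL : Bornology.IsBounded L)
    (h0L : 0 ∈ interior L) (hs : 0 < s) (hmeet : (-s • K ∩ L).Nonempty)
    (hr : r ∈ supportRatios K L) : -s⁻¹ ≤ r := by
  obtain ⟨ν, hν, rfl⟩ := hr
  obtain ⟨_, ⟨k, hk, rfl⟩, hkL⟩ := hmeet
  have hLpos : 0 < supportFun L ν := supportFun_pos hL h0L (norm_ne_zero_iff.mp (by simp [hν]))
  rw [le_div_iff₀ hLpos, neg_mul, neg_le, inv_mul_eq_div, le_div_iff₀' hs]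
  calc
    s * -supportFun K ν ≤ s * -⟪k, ν⟫ := by gcongr; exact inner_le_supportFun hK hk
    _ = ⟪-s • k, ν⟫ := by rw [real_inner_smul_left, neg_mul, mul_neg]
    _ ≤ supportFun L ν := inner_le_supportFun hL hkL

theorem bddBelow_supportRatios (hK : Bornology.IsBounded K) (hKne : K.Nonempty)
    (hL : Bornology.IsBounded L) (h0L : 0 ∈ interior L) : BddBelow (supportRatios K L) := by
  obtain ⟨k, hk⟩ := hKne
  obtain ⟨s, hs, hsk⟩ := exists_pos_smul_mem_of_zero_mem_interior h0L (-k)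
  have hmeet : (-s • K ∩ L).Nonempty := ⟨-s • k, Set.smul_mem_smul_set hk, by simpa using hsk⟩
  exact ⟨-s⁻¹, fun _ => neg_inv_le_of_mem_supportRatios hK hL h0L hs hmeet⟩

theorem exists_mem_supportRatios_le_neg_inv [CompleteSpace E] (hK : Convex ℝ K)
    (hKne : K.Nonempty) (hL : Convex ℝ L) (hLb : Bornology.IsBounded L) (h0L : 0 ∈ interior L)
    (hs : 0 < s) (hdisj : Disjoint (-s • K) L) : ∃ r ∈ supportRatios K L, r ≤ -s⁻¹ := by
  obtain ⟨f, u, hf, hfL, hfK⟩ := geometric_hahn_banach_of_nonempty_interior hL (hK.smul (-s))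
    (hdisj.symm.mono_left interior_subset) ⟨0, h0L⟩ hKne.smul_set
  obtain ⟨ν, rfl⟩ := (InnerProductSpace.toDual ℝ E).surjective f
  simp only [InnerProductSpace.toDual_apply_apply, real_inner_comm _ ν] at hfL hfK
  have hν : ν ≠ 0 := by simpa using hf
  have hLpos : 0 < supportFun L ν := supportFun_pos hLb h0L hν
  have hLle : supportFun L ν ≤ u := supportFun_le ⟨0, interior_subset h0L⟩ hfL
  have hKle : supportFun K ν ≤ -(s⁻¹ * u) := supportFun_le hKne fun k hk => by
    have hfk : u ≤ -(s * ⟪k, ν⟫) := by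
      simpa [real_inner_smul_left] using hfK _ (Set.smul_mem_smul_set hk)
    rwa [le_neg, inv_mul_le_iff₀ hs, mul_neg]
  refine ⟨_, div_mem_supportRatios K L hν, ?_⟩
  rw [div_le_iff₀ hLpos, neg_mul]
  exact hKle.trans (by gcongr)

theorem exists_mem_supportRatios_neg [CompleteSpace E] (hK : Convex ℝ K) (hKne : K.Nonempty)
    (h0K : 0 ∉ closure K) (hL : Bornology.IsBounded L) (h0L : 0 ∈ interior L) :
    ∃ r ∈ supportRatios K L, r < 0 := by
  obtain ⟨f, u, hfK, hu⟩ := geometric_hahn_banach_closed_point hK.closure isClosed_closure h0K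
  obtain ⟨ν, rfl⟩ := (InnerProductSpace.toDual ℝ E).surjective f
  simp only [InnerProductSpace.toDual_apply_apply, real_inner_comm _ ν, inner_zero_left] at hfK hu
  have hKneg : supportFun K ν < 0 :=
    (supportFun_le hKne fun k hk => (hfK k (subset_closure hk)).le).trans_lt hu
  have hν : ν ≠ 0 := by
    rintro rfl
    obtain ⟨k, hk⟩ := hKne
    simpa using (hfK k (subset_closure hk)).trans hu
  exact ⟨_, div_mem_supportRatios K L hν, div_neg_of_neg_of_pos hKneg (supportFun_pos hL h0L hν)⟩

end SupportRatios

section DilationParameters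

variable {E : Type*} [NormedAddCommGroup E] [InnerProductSpace ℝ E] {K L : Set E}

/-- The parameters `c ∈ (0, 1)` for which the reflected dilate `-(c / (1 - c)) • K` meets `L`;
the theorem computes their supremum. -/
def dilationParameters (K L : Set E) : Set ℝ :=
  {c | 0 < c ∧ c < 1 ∧ ((-(c / (1 - c))) • K ∩ L).Nonempty}

theorem smul_inter_nonempty_of_zero_mem_closure (h0K : 0 ∈ closure K) (h0L : 0 ∈ interior L)
    (s : ℝ) : (s • K ∩ L).Nonempty := by
  have hnear : (fun k => s • k) ⁻¹' L ∈ nhds (0 : E) :=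
    (continuous_const_smul s).continuousAt.preimage_mem_nhds
      (by simpa using mem_interior_iff_mem_nhds.mp h0L)
  obtain ⟨k, hkL, hk⟩ := mem_closure_iff_nhds.mp h0K _ hnear
  exact ⟨s • k, Set.smul_mem_smul_set hk, hkL⟩

theorem isLUB_dilationParameters_of_zero_mem_closure (h0K : 0 ∈ closure K)
    (h0L : 0 ∈ interior L) : IsLUB (dilationParameters K L) 1 := by
  have heq : dilationParameters K L = Set.Ioo 0 1 := Set.ext fun c =>
    ⟨fun h => ⟨h.1, h.2.1⟩,
      fun h => ⟨h.1, h.2, smul_inter_nonempty_of_zero_mem_closure h0K h0L _⟩⟩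
  exact heq ▸ isLUB_Ioo one_pos

theorem neg_inv_div_one_sub {c : ℝ} (hc : c ≠ 0) : -(c / (1 - c))⁻¹ = 1 - c⁻¹ := by
  rw [inv_div, sub_div, div_self hc, one_div, neg_sub]

theorem isLUB_dilationParameters_of_zero_notMem_closure [CompleteSpace E] (hK : Convex ℝ K)
    (hKb : Bornology.IsBounded K) (hKne : K.Nonempty) (hL : Convex ℝ L)
    (hLb : Bornology.IsBounded L) (h0L : 0 ∈ interior L) (h0K : 0 ∉ closure K) :
    IsLUB (dilationParameters K L) (1 - sInf (supportRatios K L))⁻¹ := by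
  have hbdd := bddBelow_supportRatios hKb hKne hLb h0L
  obtain ⟨q, hq, hq0⟩ := exists_mem_supportRatios_neg hK hKne h0K hLb h0L
  set m := sInf (supportRatios K L)
  have hm : m < 0 := (csInf_le hbdd hq).trans_lt hq0
  have hm1 : 0 < 1 - m := by linarith
  have hIoo : Set.Ioo 0 (1 - m)⁻¹ ⊆ dilationParameters K L := by
    rintro c ⟨hc, hcm⟩
    have hc1 : c < 1 := hcm.trans (inv_lt_one_of_one_lt₀ (by linarith))
    refine ⟨hc, hc1, Set.not_disjoint_iff_nonempty_inter.mp fun hdisj => ?_⟩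
    obtain ⟨r, hr, hrs⟩ := exists_mem_supportRatios_le_neg_inv hK hKne hL hLb h0L
      (div_pos hc (sub_pos.mpr hc1)) hdisj
    rw [neg_inv_div_one_sub hc.ne'] at hrs
    have hcm' : 1 - m < c⁻¹ := (lt_inv_comm₀ hc hm1).mp hcm
    linarith [csInf_le hbdd hr]
  have hIoc : dilationParameters K L ⊆ Set.Ioc 0 (1 - m)⁻¹ := by
    rintro c ⟨hc, hc1, hmeet⟩
    have hle : 1 - c⁻¹ ≤ m := le_csInf ⟨q, hq⟩ fun r hr => by
      rw [← neg_inv_div_one_sub hc.ne']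
      exact neg_inv_le_of_mem_supportRatios hKb hLb h0L (div_pos hc (sub_pos.mpr hc1)) hmeet hr
    exact ⟨hc, (le_inv_comm₀ hc hm1).mpr (sub_le_comm.mp hle)⟩
  exact (isLUB_Ioo (inv_pos.mpr hm1)).of_subset_of_superset (isLUB_Ioc (inv_pos.mpr hm1)) hIoo hIoc

theorem sup_dilation_meets_convexHull_general [CompleteSpace E] (hK : Convex ℝ K)
    (hKb : Bornology.IsBounded K) (hKne : K.Nonempty) (hL : Convex ℝ L)
    (hLb : Bornology.IsBounded L) (h0L : 0 ∈ interior L) :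
    (0 ∈ closure K → sSup (dilationParameters K L) = 1) ∧
    (0 ∉ closure K →
      sSup (dilationParameters K L) = (1 - sInf (supportRatios K L))⁻¹) := by
  constructor <;> intro h0K
  · have hlub := isLUB_dilationParameters_of_zero_mem_closure h0K h0L
    exact hlub.csSup_eq hlub.nonempty
  · have hlub := isLUB_dilationParameters_of_zero_notMem_closure hK hKb hKne hL hLb h0L h0K
    exact hlub.csSup_eq hlub.nonempty

end DilationParameters

/-- Corollary 6.4 of the paper. For nonempty finite `F, U ⊂ ℝⁿ`
with `0 ∈ int (conv U)`, the quantity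
`sup {c ∈ (0,1) : (−(c/(1−c))·conv F) ∩ conv U ≠ ∅}` equals `1` when `0 ∈ conv F`,
and equals `[1 − min_{|ν|=1} h_F(ν)/h_U(ν)]⁻¹` when `0 ∉ conv F`. -/
theorem sup_dilation_meets_convexHull
    (n : ℕ) (hn : 0 < n)
    (F U : Finset (EuclideanSpace ℝ (Fin n))) (hF : F.Nonempty) (hU : U.Nonempty)
    (h0U : (0 : EuclideanSpace ℝ (Fin n)) ∈
      interior (convexHull ℝ (U : Set (EuclideanSpace ℝ (Fin n))))) :
    ((0 : EuclideanSpace ℝ (Fin n)) ∈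
        convexHull ℝ (F : Set (EuclideanSpace ℝ (Fin n))) →
      sSup {c : ℝ | 0 < c ∧ c < 1 ∧
        (((-(c / (1 - c))) • convexHull ℝ (F : Set (EuclideanSpace ℝ (Fin n)))) ∩
          convexHull ℝ (U : Set (EuclideanSpace ℝ (Fin n)))).Nonempty} = 1) ∧
    ((0 : EuclideanSpace ℝ (Fin n)) ∉
        convexHull ℝ (F : Set (EuclideanSpace ℝ (Fin n))) →
      sSup {c : ℝ | 0 < c ∧ c < 1 ∧
        (((-(c / (1 - c))) • convexHull ℝ (F : Set (EuclideanSpace ℝ (Fin n)))) ∩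
          convexHull ℝ (U : Set (EuclideanSpace ℝ (Fin n)))).Nonempty} =
      (1 - sInf {r : ℝ | ∃ ν : EuclideanSpace ℝ (Fin n), ‖ν‖ = 1 ∧
        r = (F.sup' hF fun a => ⟪a, ν⟫) / (U.sup' hU fun a => ⟪a, ν⟫)})⁻¹) := by
  simpa only [dilationParameters, supportRatios, supportFun_convexHull_coe _ hF,
    supportFun_convexHull_coe _ hU, (F.finite_toSet.isClosed_convexHull (𝕜 := ℝ)).closure_eq] using
    sup_dilation_meets_convexHull_general (convex_convexHull ℝ _)
      (isBounded_convexHull.mpr F.finite_toSet.isBounded) hF.to_set.convexHull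
      (convex_convexHull ℝ _) (isBounded_convexHull.mpr U.finite_toSet.isBounded) h0U
end

section
/- Let F, U ⊂ ℝⁿ be nonempty finite sets with 0 in the interior of conv U, and set c(F,U) := sup{c ∈ (0,1) : 0 ∈ (1−c)·conv U + c·conv F}. For c ∈ (0,1) define g_c := c·h_F + (1−c)·h_U. Then: if 0 < c < c(F,U), then g_c(ν) > 0 for every unit vector ν; and if c(F,U) < c < 1, then there exists a unit vector ν with g_c(ν) < 0. -/
open scoped RealInnerProductSpace Pointwise

/-!
The function `g_c = c h_F + (1 - c) h_U` is the support function of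
`K_c = (1 - c) conv U + c conv F`, so `0 ≤ g_c` whenever `0 ∈ K_c`; otherwise Hahn–Banach, applied
to the convex set `K_c` with nonempty interior, gives a direction in which `g_c ≤ 0`. These weak
inequalities become strict because `h_U > 0` and `d g_c = c g_d + (d - c) h_U`: a weak sign of `g_d`
passes to a strict sign of `g_c` on the appropriate side of `d`.
-/

open Set Bornology

section Combination

variable {R : Type*} [CommRing R] [LinearOrder R] [IsStrictOrderedRing R] {a b c d : R}

theorem combination_pos_of_combination_nonneg (hb : 0 < b) (hc : 0 ≤ c) (hcd : c < d)
    (h : 0 ≤ d * a + (1 - d) * b) : 0 < c * a + (1 - c) * b := by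
  refine pos_of_mul_pos_right (a := d) ?_ (hc.trans hcd.le)
  calc
    0 < c * (d * a + (1 - d) * b) + (d - c) * b :=
      add_pos_of_nonneg_of_pos (mul_nonneg hc h) (mul_pos (sub_pos.2 hcd) hb)
    _ = d * (c * a + (1 - c) * b) := by ring

theorem combination_neg_of_combination_nonpos (hb : 0 < b) (hd : 0 < d) (hdc : d < c)
    (h : d * a + (1 - d) * b ≤ 0) : c * a + (1 - c) * b < 0 := by
  contrapose! h
  exact combination_pos_of_combination_nonneg hb hd.le hdc h

end Combination

section SupportFunction

variable {E : Type*} [AddCommGroup E] [Module ℝ E] [TopologicalSpace E]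
  {A B : Set E} {φ : StrongDual ℝ E} {c : ℝ}

/-- The support function `h_A` of a set `A`, as a function on the topological dual. It is the honest
supremum when `A` is nonempty and `φ` is bounded above on `A`, and takes the junk value `0`
otherwise. -/
noncomputable def supportFunction (A : Set E) (φ : StrongDual ℝ E) : ℝ :=
  sSup (φ '' A)

theorem upperBounds_image_convexHull (A : Set E) (φ : StrongDual ℝ E) :
    upperBounds (φ '' convexHull ℝ A) = upperBounds (φ '' A) := by
  ext b
  simp only [mem_upperBounds_iff_subset_Iic, image_subset_iff]
  exact ((convex_Iic b).linear_preimage φ.toLinearMap).convexHull_subset_iff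

theorem bddAbove_image_convexHull : BddAbove (φ '' convexHull ℝ A) ↔ BddAbove (φ '' A) := by
  simp only [BddAbove, upperBounds_image_convexHull]

theorem bddAbove_image_smul_of_nonneg (hc : 0 ≤ c) (hAφ : BddAbove (φ '' A)) :
    BddAbove (φ '' (c • A)) := by
  rw [image_smul_set]
  exact hAφ.smul_of_nonneg hc

theorem supportFunction_convexHull (hA : A.Nonempty) (hAφ : BddAbove (φ '' A)) :
    supportFunction (convexHull ℝ A) φ = supportFunction A φ := by
  have hlub : IsLUB (φ '' convexHull ℝ A) (supportFunction A φ) := by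
    rw [IsLUB, upperBounds_image_convexHull]
    exact isLUB_csSup (hA.image φ) hAφ
  exact hlub.csSup_eq (hA.convexHull.image φ)

theorem supportFunction_add (hA : A.Nonempty) (hAφ : BddAbove (φ '' A)) (hB : B.Nonempty)
    (hBφ : BddAbove (φ '' B)) :
    supportFunction (A + B) φ = supportFunction A φ + supportFunction B φ := by
  rw [supportFunction, image_add, csSup_add (hA.image φ) hAφ (hB.image φ) hBφ]
  rfl

theorem supportFunction_smul_of_nonneg (hc : 0 ≤ c) (A : Set E) (φ : StrongDual ℝ E) :
    supportFunction (c • A) φ = c * supportFunction A φ := by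
  rw [supportFunction, image_smul_set, Real.sSup_smul_of_nonneg hc, smul_eq_mul, supportFunction]

theorem supportFunction_nonneg_of_zero_mem (hAφ : BddAbove (φ '' A)) (h0 : 0 ∈ A) :
    0 ≤ supportFunction A φ :=
  le_csSup hAφ ⟨0, h0, map_zero φ⟩

theorem supportFunction_pos_of_zero_mem_interior [ContinuousAdd E] [ContinuousSMul ℝ E]
    (hAφ : BddAbove (φ '' A)) (h0 : 0 ∈ interior A) (hφ : φ ≠ 0) : 0 < supportFunction A φ := by
  have hnhds : φ '' A ∈ nhds 0 :=
    map_zero φ ▸ (φ.isOpenMap_of_ne_zero hφ).image_mem_nhds (mem_interior_iff_mem_nhds.1 h0)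
  obtain ⟨t, htA, ht⟩ := Filter.nonempty_of_mem
    (Filter.inter_mem (mem_nhdsWithin_of_mem_nhds hnhds) (self_mem_nhdsWithin (s := Ioi 0)))
  exact lt_csSup_of_lt hAφ htA ht

end SupportFunction

theorem exists_norm_eq_one_supportFunction_nonpos {E : Type*} [NormedAddCommGroup E]
    [NormedSpace ℝ E] {A : Set E} (hA : Convex ℝ A) (hint : (interior A).Nonempty)
    (h0 : 0 ∉ interior A) : ∃ φ : StrongDual ℝ E, ‖φ‖ = 1 ∧ supportFunction A φ ≤ 0 := by
  obtain ⟨f, hf, hfA⟩ := geometric_hahn_banach_of_nonempty_interior_point hA h0 hint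
  refine ⟨‖f‖⁻¹ • f, norm_smul_inv_norm (𝕜 := ℝ) hf, Real.sSup_nonpos ?_⟩
  rintro _ ⟨a, ha, rfl⟩
  exact mul_nonpos_of_nonneg_of_nonpos (by positivity) (map_zero f ▸ hfA a ha)

theorem supportFunction_toDual {E : Type*} [NormedAddCommGroup E] [InnerProductSpace ℝ E]
    [CompleteSpace E] {A : Finset E} (hA : A.Nonempty) (ν : E) :
    supportFunction (A : Set E) (InnerProductSpace.toDual ℝ E ν) = A.sup' hA fun a => ⟪a, ν⟫ := by
  simp only [Finset.sup'_eq_csSup_image, supportFunction, real_inner_comm ν]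
  rfl

section WeightedHull

variable {E : Type*} [AddCommGroup E] [Module ℝ E] {F U : Set E} {c : ℝ}

/-- The weighted Minkowski sum `K_c = (1 - c) conv U + c conv F`, interpolating between `conv U` at
`c = 0` and `conv F` at `c = 1`. -/
def weightedHull (F U : Set E) (c : ℝ) : Set E :=
  (1 - c) • convexHull ℝ U + c • convexHull ℝ F

/-- The critical weight `c(F, U)`: the supremum of the weights `c ∈ (0, 1)` with
`0 ∈ weightedHull F U c`. It is `0` when there is no such weight. -/
noncomputable def criticalWeight (F U : Set E) : ℝ :=
  sSup {c : ℝ | 0 < c ∧ c < 1 ∧ 0 ∈ weightedHull F U c}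

theorem convex_weightedHull (F U : Set E) (c : ℝ) : Convex ℝ (weightedHull F U c) :=
  ((convex_convexHull ℝ U).smul _).add ((convex_convexHull ℝ F).smul _)

theorem criticalWeight_nonneg (F U : Set E) : 0 ≤ criticalWeight F U :=
  Real.sSup_nonneg fun _ hc => hc.1.le

theorem exists_gt_zero_mem_weightedHull (hc0 : 0 ≤ c) (hc : c < criticalWeight F U) :
    ∃ d, c < d ∧ d < 1 ∧ 0 ∈ weightedHull F U d := by
  have hne : {c : ℝ | 0 < c ∧ c < 1 ∧ 0 ∈ weightedHull F U c}.Nonempty := by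
    by_contra! hempty
    rw [criticalWeight, hempty, Real.sSup_empty] at hc
    exact hc.not_ge hc0
  obtain ⟨d, ⟨-, hd1, hd⟩, hcd⟩ := exists_lt_of_lt_csSup hne hc
  exact ⟨d, hcd, hd1, hd⟩

theorem zero_notMem_weightedHull (hc : criticalWeight F U < c) (hc1 : c < 1) :
    0 ∉ weightedHull F U c := fun h0 =>
  have hbdd : BddAbove {c : ℝ | 0 < c ∧ c < 1 ∧ 0 ∈ weightedHull F U c} :=
    ⟨1, fun _ hd => hd.2.1.le⟩
  hc.not_ge (le_csSup hbdd ⟨(criticalWeight_nonneg F U).trans_lt hc, hc1, h0⟩)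

variable [TopologicalSpace E] {φ : StrongDual ℝ E}

theorem nonempty_interior_weightedHull [ContinuousAdd E] [ContinuousConstSMul ℝ E]
    (hF : F.Nonempty) (hU : (interior (convexHull ℝ U)).Nonempty) (hc : c ≠ 1) :
    (interior (weightedHull F U c)).Nonempty := by
  have hadd : (interior ((1 - c) • convexHull ℝ U) + c • convexHull ℝ F).Nonempty := by
    rw [interior_smul₀ (sub_ne_zero.2 hc.symm)]
    exact hU.smul_set.add hF.convexHull.smul_set
  exact hadd.mono subset_interior_add_left

theorem bddAbove_image_weightedHull (hFφ : BddAbove (φ '' F)) (hUφ : BddAbove (φ '' U))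
    (hc0 : 0 ≤ c) (hc1 : c ≤ 1) : BddAbove (φ '' weightedHull F U c) := by
  rw [weightedHull, image_add]
  exact (bddAbove_image_smul_of_nonneg (sub_nonneg.2 hc1) (bddAbove_image_convexHull.2 hUφ)).add
    (bddAbove_image_smul_of_nonneg hc0 (bddAbove_image_convexHull.2 hFφ))

theorem supportFunction_weightedHull (hF : F.Nonempty) (hU : U.Nonempty)
    (hFφ : BddAbove (φ '' F)) (hUφ : BddAbove (φ '' U)) (hc0 : 0 ≤ c) (hc1 : c ≤ 1) :
    supportFunction (weightedHull F U c) φ =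
      c * supportFunction F φ + (1 - c) * supportFunction U φ := by
  have hc1' : 0 ≤ 1 - c := sub_nonneg.2 hc1
  rw [weightedHull, supportFunction_add hU.convexHull.smul_set
    (bddAbove_image_smul_of_nonneg hc1' (bddAbove_image_convexHull.2 hUφ))
    hF.convexHull.smul_set
    (bddAbove_image_smul_of_nonneg hc0 (bddAbove_image_convexHull.2 hFφ)),
    supportFunction_smul_of_nonneg hc1', supportFunction_smul_of_nonneg hc0,
    supportFunction_convexHull hU hUφ, supportFunction_convexHull hF hFφ, add_comm]

end WeightedHull

theorem sign_of_combined_support_function_general {E : Type*} [NormedAddCommGroup E]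
    [NormedSpace ℝ E] {F U : Set E} (hF : F.Nonempty) (hFb : IsBounded F) (hUb : IsBounded U)
    (h0U : 0 ∈ interior (convexHull ℝ U)) :
    (∀ c : ℝ, 0 < c → c < criticalWeight F U → ∀ φ : StrongDual ℝ E, ‖φ‖ = 1 →
      0 < c * supportFunction F φ + (1 - c) * supportFunction U φ) ∧
    (∀ c : ℝ, criticalWeight F U < c → c < 1 → ∃ φ : StrongDual ℝ E, ‖φ‖ = 1 ∧
      c * supportFunction F φ + (1 - c) * supportFunction U φ < 0) := by
  have hU : U.Nonempty := convexHull_nonempty_iff.1 ⟨0, interior_subset h0U⟩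
  have hbdd {A : Set E} (hA : IsBounded A) (φ : StrongDual ℝ E) : BddAbove (φ '' A) :=
    (φ.lipschitz.isBounded_image hA).bddAbove
  have hUpos (φ : StrongDual ℝ E) (hφ : ‖φ‖ = 1) : 0 < supportFunction U φ := by
    rw [← supportFunction_convexHull hU (hbdd hUb φ)]
    exact supportFunction_pos_of_zero_mem_interior (bddAbove_image_convexHull.2 (hbdd hUb φ)) h0U
      (norm_ne_zero_iff.1 (hφ ▸ one_ne_zero))
  constructor
  · intro c hc0 hc φ hφ
    obtain ⟨d, hcd, hd1, h0⟩ := exists_gt_zero_mem_weightedHull hc0.le hc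
    refine combination_pos_of_combination_nonneg (hUpos φ hφ) hc0.le hcd ?_
    have hd0 := (hc0.trans hcd).le
    rw [← supportFunction_weightedHull hF hU (hbdd hFb φ) (hbdd hUb φ) hd0 hd1.le]
    exact supportFunction_nonneg_of_zero_mem
      (bddAbove_image_weightedHull (hbdd hFb φ) (hbdd hUb φ) hd0 hd1.le) h0
  · intro c hc hc1
    obtain ⟨d, hd, hdc⟩ := exists_between hc
    have hd0 : 0 < d := (criticalWeight_nonneg F U).trans_lt hd
    have hd1 : d < 1 := hdc.trans hc1
    obtain ⟨φ, hφ, hφK⟩ := exists_norm_eq_one_supportFunction_nonpos (convex_weightedHull F U d)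
      (nonempty_interior_weightedHull hF ⟨0, h0U⟩ hd1.ne)
      fun h0 => zero_notMem_weightedHull hd hd1 (interior_subset h0)
    rw [supportFunction_weightedHull hF hU (hbdd hFb φ) (hbdd hUb φ) hd0.le hd1.le] at hφK
    exact ⟨φ, hφ, combination_neg_of_combination_nonpos (hUpos φ hφ) hd0 hdc hφK⟩

/-- Corollary 6.5 of the paper. Let
`c(F,U) = sup {c ∈ (0,1) : 0 ∈ (1−c)·conv U + c·conv F}` and
`g_c = c·h_F + (1−c)·h_U`. If `0 < c < c(F,U)` then `g_c > 0` on the unit sphere;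
if `c(F,U) < c < 1` then `g_c < 0` somewhere on the unit sphere. -/
theorem sign_of_combined_support_function
    (n : ℕ) (hn : 0 < n)
    (F U : Finset (EuclideanSpace ℝ (Fin n))) (hF : F.Nonempty) (hU : U.Nonempty)
    (h0U : (0 : EuclideanSpace ℝ (Fin n)) ∈
      interior (convexHull ℝ (U : Set (EuclideanSpace ℝ (Fin n)))))
    (cFU : ℝ)
    (hcFU : cFU = sSup {c : ℝ | 0 < c ∧ c < 1 ∧
      (0 : EuclideanSpace ℝ (Fin n)) ∈
        (1 - c) • convexHull ℝ (U : Set (EuclideanSpace ℝ (Fin n))) +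
          c • convexHull ℝ (F : Set (EuclideanSpace ℝ (Fin n)))}) :
    (∀ c : ℝ, 0 < c → c < cFU → ∀ ν : EuclideanSpace ℝ (Fin n), ‖ν‖ = 1 →
      0 < c * (F.sup' hF fun a => ⟪a, ν⟫) + (1 - c) * (U.sup' hU fun a => ⟪a, ν⟫)) ∧
    (∀ c : ℝ, cFU < c → c < 1 → ∃ ν : EuclideanSpace ℝ (Fin n), ‖ν‖ = 1 ∧
      c * (F.sup' hF fun a => ⟪a, ν⟫) + (1 - c) * (U.sup' hU fun a => ⟪a, ν⟫) < 0) := by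
  simpa only [criticalWeight, weightedHull, ← hcFU, LinearIsometryEquiv.norm_map,
    (InnerProductSpace.toDual ℝ (EuclideanSpace ℝ (Fin n))).surjective.forall,
    (InnerProductSpace.toDual ℝ (EuclideanSpace ℝ (Fin n))).surjective.exists,
    supportFunction_toDual hF, supportFunction_toDual hU] using
    sign_of_combined_support_function_general hF.to_set F.finite_toSet.isBounded
      U.finite_toSet.isBounded h0U
end

section
/- Let F, U ⊂ ℝⁿ be nonempty finite sets with 0 in the interior of conv U, and let k ≥ 1 be a natural number. Define c_k(F,U) := sup{c ∈ (0,1) : the function x ↦ (∑_{u∈F} e^{k⟨u,x⟩})^{−c/k} · (∑_{u∈U} e^{k⟨u,x⟩})^{−(1−c)/k} is Lebesgue-integrable on ℝⁿ}. Then c_k(F,U) = sup{c ∈ (0,1) : 0 ∈ (1−c)·conv U + c·conv F} = sup{c ∈ (0,1) : (−(c/(1−c))·conv F) ∩ conv U ≠ ∅} > 0. In particular, c_k(F,U) is independent of k. -/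
open scoped RealInnerProductSpace Pointwise

/-! Put `P_c = (1 - c) • conv U + c • conv F`. The integrand `G_c` satisfies
`G_c(x) ≤ exp (-⟪p, x⟫)` for every `p ∈ P_c`, so it decays exponentially once `0` is interior to
`P_c`. Conversely, a vector `v` with `⟪p, v⟫ < 0` on `P_c` gives `G_c(x + v) ≥ a * G_c(x)` with a
constant `a > 1`, which translation invariance of the measure forbids for an integrable `G_c`; hence
integrability forces `0 ∈ P_c`. The gap between the two conditions does not affect the supremum: if
`0 ∈ P_c` and `c' < c`, moving towards `conv U` puts `0` in the interior of `P_{c'}`. -/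

open MeasureTheory Set Filter Topology

section Order

lemma csSup_eq_csSup_of_subset_closure {α : Type*} [ConditionallyCompleteLattice α]
    [TopologicalSpace α] [ClosedIicTopology α] {s t : Set α} (hst : s ⊆ t) (hts : t ⊆ closure s)
    (ht : t.Nonempty) (hbdd : BddAbove t) : sSup s = sSup t :=
  have hlub : IsLUB s (sSup t) :=
    (isLUB_iff_of_subset_of_subset_closure hst hts).2 (isLUB_csSup ht hbdd)
  hlub.csSup_eq (closure_nonempty_iff.1 (ht.mono hts))

end Order

section Convex

lemma zero_mem_smul_add_smul_iff {𝕜 E : Type*} [Field 𝕜] [AddCommGroup E] [Module 𝕜 E]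
    {C D : Set E} {c : 𝕜} (hc : c ≠ 1) :
    (0 : E) ∈ (1 - c) • C + c • D ↔ ((-(c / (1 - c))) • D ∩ C).Nonempty := by
  have hc' : 1 - c ≠ 0 := sub_ne_zero.2 hc.symm
  have key (u w : E) : (1 - c) • u + c • w = 0 ↔ -(c / (1 - c)) • w = u := by
    rw [add_eq_zero_iff_eq_neg, ← eq_inv_smul_iff₀ hc', smul_neg, smul_smul, neg_smul,
      div_eq_inv_mul, eq_comm]
  constructor
  · rintro ⟨_, ⟨u, hu, rfl⟩, _, ⟨w, hw, rfl⟩, hsum⟩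
    exact ⟨u, ⟨w, hw, (key u w).1 hsum⟩, hu⟩
  · rintro ⟨u, ⟨w, hw, hwu⟩, hu⟩
    exact ⟨_, smul_mem_smul_set hu, _, smul_mem_smul_set hw, (key u w).2 hwu⟩

variable {E : Type*} [AddCommGroup E] [Module ℝ E] [TopologicalSpace E] [ContinuousSMul ℝ E]

lemma exists_zero_mem_smul_add_smul {C D : Set E} (hC : C ∈ 𝓝 (0 : E)) (hD : D.Nonempty) :
    ∃ c : ℝ, 0 < c ∧ c < 1 ∧ (0 : E) ∈ (1 - c) • C + c • D := by
  obtain ⟨w, hw⟩ := hD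
  have hlim : Tendsto (fun c : ℝ ↦ -(c / (1 - c)) • w) (𝓝[>] 0) (𝓝 0) := by
    have hcont : ContinuousAt (fun c : ℝ ↦ -(c / (1 - c)) • w) 0 := by
      fun_prop (disch := norm_num)
    simpa using hcont.tendsto.mono_left nhdsWithin_le_nhds
  obtain ⟨c, hcC, hc0, hc1⟩ :=
    ((hlim.eventually_mem hC).and (Ioo_mem_nhdsGT (zero_lt_one' ℝ))).exists
  exact ⟨c, hc0, hc1, (zero_mem_smul_add_smul_iff hc1.ne).2 ⟨_, smul_mem_smul_set hw, hcC⟩⟩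

lemma zero_mem_interior_smul_add_smul [IsTopologicalAddGroup E] {C D : Set E}
    (hC : Convex ℝ C) (h0C : (0 : E) ∈ interior C) {c c' : ℝ} (hc1 : c ≤ 1)
    (h : (0 : E) ∈ (1 - c) • C + c • D) (hc'0 : 0 ≤ c') (hc'c : c' < c) :
    (0 : E) ∈ interior ((1 - c') • C + c' • D) := by
  obtain ⟨_, ⟨u, hu, rfl⟩, _, ⟨w, hw, rfl⟩, hsum : (1 - c) • u + c • w = 0⟩ := h
  have hc0 : 0 < c := hc'0.trans_lt hc'c
  have hc'1 : 0 < 1 - c' := by linarith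
  set t : ℝ := c' * (1 - c) / (c * (1 - c')) with ht
  have ht0 : 0 ≤ t := by have := sub_nonneg.2 hc1; positivity
  have ht1 : t < 1 := by rw [ht, div_lt_one (by positivity)]; linarith
  have htu : t • u ∈ interior C := by
    simpa using hC.combo_interior_self_mem_interior h0C hu (sub_pos.2 ht1) ht0 (by ring)
  have hcancel : (1 - c') • t • u + c' • w = 0 := by
    have hcoef : (1 - c') * t = c' / c * (1 - c) := by rw [ht]; field_simp
    rw [smul_smul, hcoef, ← div_mul_cancel₀ c' hc0.ne', mul_smul, mul_smul,
      div_mul_cancel₀ c' hc0.ne', ← smul_add, hsum, smul_zero]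
  have hsub : (1 - c') • interior C + c' • D ⊆ interior ((1 - c') • C + c' • D) :=
    interior_maximal (add_subset_add_right (smul_set_mono interior_subset))
      (isOpen_interior.smul₀ hc'1.ne').add_right
  exact hsub ⟨_, smul_mem_smul_set htu, _, smul_mem_smul_set hw, hcancel⟩

lemma exists_forall_inner_neg_of_zero_notMem {E : Type*} [NormedAddCommGroup E]
    [InnerProductSpace ℝ E] [CompleteSpace E] {C : Set E} (hconv : Convex ℝ C)
    (hclosed : IsClosed C) (h0 : (0 : E) ∉ C) : ∃ v : E, ∀ p ∈ C, ⟪p, v⟫ < 0 := by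
  obtain ⟨f, s, hs, hs0⟩ := geometric_hahn_banach_closed_point hconv hclosed h0
  rw [map_zero] at hs0
  refine ⟨(InnerProductSpace.toDual ℝ E).symm f, fun p hp ↦ ?_⟩
  rw [real_inner_comm, InnerProductSpace.toDual_symm_apply]
  exact (hs p hp).trans hs0

end Convex

section Integrability

lemma integrable_exp_neg_mul_norm {E : Type*} [NormedAddCommGroup E] [NormedSpace ℝ E]
    [FiniteDimensional ℝ E] [MeasurableSpace E] [BorelSpace E] (μ : Measure E)
    [μ.IsAddHaarMeasure] {r : ℝ} (hr : 0 < r) :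
    Integrable (fun x ↦ Real.exp (-(r * ‖x‖))) μ := by
  cases subsingleton_or_nontrivial E
  · have hcont : Continuous fun x : E ↦ Real.exp (-(r * ‖x‖)) := by fun_prop
    exact hcont.integrable_of_hasCompactSupport (.of_compactSpace _)
  · refine (integrable_fun_norm_addHaar μ (f := fun y ↦ Real.exp (-(r * y)))).2 ?_
    have hd : (-1 : ℝ) < (Module.finrank ℝ E - 1 : ℕ) :=
      neg_one_lt_zero.trans_le (Nat.cast_nonneg _)
    simpa using integrableOn_rpow_mul_exp_neg_mul_rpow hd one_pos hr

lemma not_integrable_of_mul_le_comp_add_right {G : Type*} [AddGroup G] [MeasurableSpace G]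
    [MeasurableAdd G] (μ : Measure G) [μ.IsAddRightInvariant] [NeZero μ] {f : G → ℝ} {a : ℝ} {v : G}
    (hf : ∀ x, 0 < f x) (ha : 1 < a) (hfv : ∀ x, a * f x ≤ f (x + v)) : ¬ Integrable f μ := by
  intro hint
  have hpos : 0 < ∫ x, f x ∂μ := by
    rw [integral_pos_iff_support_of_nonneg (fun x ↦ (hf x).le) hint,
      Function.support_eq_univ fun x ↦ (hf x).ne']
    exact NeZero.pos _
  have hle : a * ∫ x, f x ∂μ ≤ ∫ x, f x ∂μ := calc
    a * ∫ x, f x ∂μ = ∫ x, a * f x ∂μ := (integral_const_mul a f).symm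
    _ ≤ ∫ x, f (x + v) ∂μ := integral_mono (hint.const_mul a) (hint.comp_add_right v) hfv
    _ = ∫ x, f x ∂μ := integral_add_right_eq_self f v
  exact hle.not_gt (lt_mul_of_one_lt_left hpos ha)

lemma integrable_of_le_exp_neg_inner {E : Type*} [NormedAddCommGroup E] [InnerProductSpace ℝ E]
    [FiniteDimensional ℝ E] [MeasurableSpace E] [BorelSpace E] {μ : Measure E}
    [μ.IsAddHaarMeasure] {C : Set E} (hC : C ∈ 𝓝 (0 : E)) {f : E → ℝ}
    (hfm : AEStronglyMeasurable f μ) (hf0 : ∀ x, 0 ≤ f x)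
    (hf : ∀ p ∈ C, ∀ x, f x ≤ Real.exp (-⟪p, x⟫)) : Integrable f μ := by
  obtain ⟨r, hr, hball⟩ := Metric.nhds_basis_closedBall.mem_iff.1 hC
  refine (integrable_exp_neg_mul_norm μ hr).mono' hfm (.of_forall fun x ↦ ?_)
  have hmem : (r * ‖x‖⁻¹) • x ∈ C := hball <| by
    rw [mem_closedBall_zero_iff, norm_smul, norm_mul, norm_inv, norm_norm,
      Real.norm_of_nonneg hr.le, mul_assoc]
    exact mul_le_of_le_one_right hr.le inv_mul_le_one
  have hinner : ⟪(r * ‖x‖⁻¹) • x, x⟫ = r * ‖x‖ := by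
    rw [real_inner_smul_left, real_inner_self_eq_norm_mul_norm, mul_assoc, ← mul_assoc ‖x‖⁻¹]
    rcases eq_or_ne ‖x‖ 0 with hx | hx <;> simp [hx]
  rw [Real.norm_of_nonneg (hf0 x), ← hinner]
  exact hf _ hmem x

end Integrability

section ExponentialSums

variable {E : Type*} [NormedAddCommGroup E] [InnerProductSpace ℝ E]

/-- The exponential sum `∑_{u ∈ A} e^{k⟨u, x⟩}` with frequencies in the finite set `A`, scaled
by `k`. -/
noncomputable def expSum (A : Finset E) (k : ℝ) (x : E) : ℝ :=
  ∑ u ∈ A, Real.exp (k * ⟪u, x⟫)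

variable {A : Finset E} {k : ℝ}

lemma expSum_nonneg (A : Finset E) (k : ℝ) (x : E) : 0 ≤ expSum A k x :=
  Finset.sum_nonneg fun _ _ ↦ Real.exp_nonneg _

lemma expSum_pos (hA : A.Nonempty) (k : ℝ) (x : E) : 0 < expSum A k x :=
  Finset.sum_pos (fun _ _ ↦ Real.exp_pos _) hA

lemma continuous_expSum (A : Finset E) (k : ℝ) : Continuous (expSum A k) := by
  unfold expSum
  fun_prop

lemma exp_inner_le_expSum (hk : 0 ≤ k) {p : E} (hp : p ∈ convexHull ℝ (A : Set E)) (x : E) :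
    Real.exp (k * ⟪p, x⟫) ≤ expSum A k x := by
  have hconv : ConvexOn ℝ univ fun u : E ↦ ⟪u, x⟫ :=
    ((innerₗ E).flip x).convexOn convex_univ
  obtain ⟨u, hu, hpu⟩ := hconv.exists_ge_of_mem_convexHull (subset_univ _) hp
  calc Real.exp (k * ⟪p, x⟫) ≤ Real.exp (k * ⟪u, x⟫) := by gcongr
    _ ≤ expSum A k x :=
      Finset.single_le_sum (f := fun u ↦ Real.exp (k * ⟪u, x⟫)) (fun _ _ ↦ Real.exp_nonneg _) hu

lemma expSum_add_le (hk : 0 ≤ k) {v : E} {m : ℝ} (hv : ∀ u ∈ A, ⟪u, v⟫ ≤ m) (x : E) :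
    expSum A k (x + v) ≤ Real.exp (k * m) * expSum A k x := by
  simp only [expSum, Finset.mul_sum, ← Real.exp_add]
  refine Finset.sum_le_sum fun u hu ↦ Real.exp_le_exp.2 ?_
  rw [inner_add_right, ← mul_add, add_comm m]
  gcongr
  exact hv u hu

lemma expSum_rpow_le_exp (hk : 0 < k) {a : ℝ} (ha : 0 ≤ a) {p : E}
    (hp : p ∈ convexHull ℝ (A : Set E)) (x : E) :
    expSum A k x ^ (-(a / k)) ≤ Real.exp (-(a * ⟪p, x⟫)) := calc
  expSum A k x ^ (-(a / k)) ≤ Real.exp (k * ⟪p, x⟫) ^ (-(a / k)) :=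
    Real.rpow_le_rpow_of_nonpos (Real.exp_pos _) (exp_inner_le_expSum hk.le hp x)
      (neg_nonpos.2 (by positivity))
  _ = Real.exp (-(a * ⟪p, x⟫)) := by
    rw [← Real.exp_mul]
    field_simp

lemma exp_mul_expSum_rpow_le (hA : A.Nonempty) (hk : 0 < k) {a : ℝ} (ha : 0 ≤ a) {v : E} {m : ℝ}
    (hv : ∀ u ∈ A, ⟪u, v⟫ ≤ m) (x : E) :
    Real.exp (-(a * m)) * expSum A k x ^ (-(a / k)) ≤ expSum A k (x + v) ^ (-(a / k)) := calc
  Real.exp (-(a * m)) * expSum A k x ^ (-(a / k))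
      = (Real.exp (k * m) * expSum A k x) ^ (-(a / k)) := by
    rw [Real.mul_rpow (Real.exp_nonneg _) (expSum_nonneg A k x), ← Real.exp_mul]
    field_simp
  _ ≤ expSum A k (x + v) ^ (-(a / k)) :=
    Real.rpow_le_rpow_of_nonpos (expSum_pos hA k _) (expSum_add_le hk.le hv x)
      (neg_nonpos.2 (by positivity))

end ExponentialSums

section SingularityExponent

variable {E : Type*} [NormedAddCommGroup E] [InnerProductSpace ℝ E] {F U : Finset E} {k c : ℝ}

/-- The weight `(∑_{u ∈ F} e^{k⟨u, x⟩})^{-c/k} (∑_{u ∈ U} e^{k⟨u, x⟩})^{-(1-c)/k}` whose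
integrability defines the singularity exponent. -/
noncomputable def singularityWeight (F U : Finset E) (k c : ℝ) (x : E) : ℝ :=
  expSum F k x ^ (-(c / k)) * expSum U k x ^ (-((1 - c) / k))

/-- The singularity exponent `c_k(F, U)` with respect to the measure `μ`. -/
noncomputable def singularityExponent [MeasurableSpace E] (μ : Measure E) (F U : Finset E) (k : ℝ) :
    ℝ :=
  sSup {c : ℝ | 0 < c ∧ c < 1 ∧ Integrable (singularityWeight F U k c) μ}

lemma singularityWeight_pos (hF : F.Nonempty) (hU : U.Nonempty) (k c : ℝ) (x : E) :
    0 < singularityWeight F U k c x :=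
  mul_pos (Real.rpow_pos_of_pos (expSum_pos hF k x) _) (Real.rpow_pos_of_pos (expSum_pos hU k x) _)

lemma continuous_singularityWeight (hF : F.Nonempty) (hU : U.Nonempty) (k c : ℝ) :
    Continuous (singularityWeight F U k c) :=
  ((continuous_expSum F k).rpow_const fun x ↦ .inl (expSum_pos hF k x).ne').mul
    ((continuous_expSum U k).rpow_const fun x ↦ .inl (expSum_pos hU k x).ne')

lemma singularityWeight_le_exp_neg_inner (hk : 0 < k) (hc0 : 0 ≤ c) (hc1 : c ≤ 1) {p : E}
    (hp : p ∈ (1 - c) • convexHull ℝ (U : Set E) + c • convexHull ℝ (F : Set E)) (x : E) :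
    singularityWeight F U k c x ≤ Real.exp (-⟪p, x⟫) := by
  obtain ⟨_, ⟨u, hu, rfl⟩, _, ⟨w, hw, rfl⟩, rfl⟩ := hp
  calc singularityWeight F U k c x
      ≤ Real.exp (-(c * ⟪w, x⟫)) * Real.exp (-((1 - c) * ⟪u, x⟫)) :=
        mul_le_mul (expSum_rpow_le_exp hk hc0 hw x)
          (expSum_rpow_le_exp hk (sub_nonneg.2 hc1) hu x)
          (Real.rpow_nonneg (expSum_nonneg U k x) _) (Real.exp_nonneg _)
    _ = Real.exp (-⟪(1 - c) • u + c • w, x⟫) := by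
        rw [← Real.exp_add, inner_add_left, real_inner_smul_left, real_inner_smul_left, neg_add_rev]

lemma exp_mul_singularityWeight_le (hF : F.Nonempty) (hU : U.Nonempty) (hk : 0 < k) (hc0 : 0 ≤ c)
    (hc1 : c ≤ 1) {v : E} {mF mU : ℝ} (hvF : ∀ w ∈ F, ⟪w, v⟫ ≤ mF) (hvU : ∀ u ∈ U, ⟪u, v⟫ ≤ mU)
    (x : E) :
    Real.exp (-((1 - c) * mU + c * mF)) * singularityWeight F U k c x ≤
      singularityWeight F U k c (x + v) := calc
  Real.exp (-((1 - c) * mU + c * mF)) * singularityWeight F U k c x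
      = (Real.exp (-(c * mF)) * expSum F k x ^ (-(c / k))) *
          (Real.exp (-((1 - c) * mU)) * expSum U k x ^ (-((1 - c) / k))) := by
    rw [neg_add_rev, Real.exp_add, singularityWeight, mul_mul_mul_comm]
  _ ≤ singularityWeight F U k c (x + v) :=
    mul_le_mul (exp_mul_expSum_rpow_le hF hk hc0 hvF x)
      (exp_mul_expSum_rpow_le hU hk (sub_nonneg.2 hc1) hvU x)
      (mul_nonneg (Real.exp_nonneg _) (Real.rpow_nonneg (expSum_nonneg U k x) _))
      (Real.rpow_nonneg (expSum_nonneg F k _) _)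

lemma zero_mem_of_integrable_singularityWeight [CompleteSpace E] [MeasurableSpace E]
    [BorelSpace E] {μ : Measure E} [μ.IsAddRightInvariant] [NeZero μ] (hF : F.Nonempty)
    (hU : U.Nonempty) (hk : 0 < k) (hc0 : 0 ≤ c) (hc1 : c ≤ 1)
    (h : Integrable (singularityWeight F U k c) μ) :
    (0 : E) ∈ (1 - c) • convexHull ℝ (U : Set E) + c • convexHull ℝ (F : Set E) := by
  by_contra h0
  have hconv := ((convex_convexHull ℝ (U : Set E)).smul (1 - c)).add
    ((convex_convexHull ℝ (F : Set E)).smul c)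
  have hclosed := (((U.finite_toSet.isCompact_convexHull ℝ).smul (1 - c)).add
    ((F.finite_toSet.isCompact_convexHull ℝ).smul c)).isClosed
  obtain ⟨v, hv⟩ := exists_forall_inner_neg_of_zero_notMem hconv hclosed h0
  obtain ⟨u, hu, hmaxU⟩ := U.exists_max_image (⟪·, v⟫) hU
  obtain ⟨w, hw, hmaxF⟩ := F.exists_max_image (⟪·, v⟫) hF
  have hneg : (1 - c) * ⟪u, v⟫ + c * ⟪w, v⟫ < 0 := by
    simpa only [inner_add_left, real_inner_smul_left] using
      hv _ (add_mem_add (smul_mem_smul_set (subset_convexHull ℝ _ hu))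
        (smul_mem_smul_set (subset_convexHull ℝ _ hw)))
  exact not_integrable_of_mul_le_comp_add_right μ (singularityWeight_pos hF hU k c)
    (Real.one_lt_exp_iff.2 (neg_pos.2 hneg))
    (exp_mul_singularityWeight_le hF hU hk hc0 hc1 hmaxF hmaxU) h

variable [FiniteDimensional ℝ E] [MeasurableSpace E] [BorelSpace E] (μ : Measure E)
  [μ.IsAddHaarMeasure]

lemma integrable_singularityWeight (hF : F.Nonempty) (hU : U.Nonempty) (hk : 0 < k)
    (hc0 : 0 ≤ c) (hc1 : c ≤ 1)
    (h : (0 : E) ∈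
      interior ((1 - c) • convexHull ℝ (U : Set E) + c • convexHull ℝ (F : Set E))) :
    Integrable (singularityWeight F U k c) μ :=
  integrable_of_le_exp_neg_inner (mem_interior_iff_mem_nhds.1 h)
    (continuous_singularityWeight hF hU k c).aestronglyMeasurable
    (fun x ↦ (singularityWeight_pos hF hU k c x).le)
    (fun _ hp ↦ singularityWeight_le_exp_neg_inner hk hc0 hc1 hp)

lemma singularityExponent_eq_sSup (hF : F.Nonempty)
    (h0U : (0 : E) ∈ interior (convexHull ℝ (U : Set E))) (hk : 0 < k) :
    singularityExponent μ F U k = sSup {c : ℝ | 0 < c ∧ c < 1 ∧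
      (0 : E) ∈ (1 - c) • convexHull ℝ (U : Set E) + c • convexHull ℝ (F : Set E)} := by
  have hU : U.Nonempty := by simpa using nonempty_of_mem (interior_subset h0U)
  refine csSup_eq_csSup_of_subset_closure ?_ ?_ ?_ ⟨1, fun _ h ↦ h.2.1.le⟩
  · exact fun c ⟨hc0, hc1, hint⟩ ↦
      ⟨hc0, hc1, zero_mem_of_integrable_singularityWeight hF hU hk hc0.le hc1.le hint⟩
  · rintro c ⟨hc0, hc1, hmem⟩
    have hsub : Ioo 0 c ⊆ {c | 0 < c ∧ c < 1 ∧ Integrable (singularityWeight F U k c) μ} :=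
      fun c' ⟨hc'0, hc'c⟩ ↦ ⟨hc'0, hc'c.trans hc1,
        integrable_singularityWeight μ hF hU hk hc'0.le (hc'c.trans hc1).le <|
          zero_mem_interior_smul_add_smul (convex_convexHull ℝ _) h0U hc1.le hmem hc'0.le hc'c⟩
    exact closure_mono hsub (by simpa [closure_Ioo hc0.ne] using hc0.le)
  · exact exists_zero_mem_smul_add_smul (mem_interior_iff_mem_nhds.1 h0U) hF.to_set.convexHull

end SingularityExponent

theorem singularity_exponent_eq_convex_threshold_general
    {E : Type*} [NormedAddCommGroup E] [InnerProductSpace ℝ E] [FiniteDimensional ℝ E]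
    [MeasurableSpace E] [BorelSpace E] (μ : Measure E) [μ.IsAddHaarMeasure]
    {F U : Finset E} (hF : F.Nonempty) (h0U : (0 : E) ∈ interior (convexHull ℝ (U : Set E)))
    {k : ℝ} (hk : 0 < k) :
    singularityExponent μ F U k =
      sSup {c : ℝ | 0 < c ∧ c < 1 ∧
        (0 : E) ∈ (1 - c) • convexHull ℝ (U : Set E) + c • convexHull ℝ (F : Set E)} ∧
    sSup {c : ℝ | 0 < c ∧ c < 1 ∧
        (0 : E) ∈ (1 - c) • convexHull ℝ (U : Set E) + c • convexHull ℝ (F : Set E)} =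
      sSup {c : ℝ | 0 < c ∧ c < 1 ∧
        ((-(c / (1 - c))) • convexHull ℝ (F : Set E) ∩ convexHull ℝ (U : Set E)).Nonempty} ∧
    0 < singularityExponent μ F U k := by
  have hexp := singularityExponent_eq_sSup μ hF h0U hk
  refine ⟨hexp, ?_, ?_⟩
  · congr 1
    ext c
    exact and_congr_right fun _ ↦ and_congr_right fun hc1 ↦ zero_mem_smul_add_smul_iff hc1.ne
  · have hconvF : (convexHull ℝ (F : Set E)).Nonempty := hF.to_set.convexHull
    obtain ⟨c, hc0, hc1, hmem⟩ :=
      exists_zero_mem_smul_add_smul (mem_interior_iff_mem_nhds.1 h0U) hconvF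
    exact hexp ▸ hc0.trans_le (le_csSup ⟨1, fun _ h ↦ h.2.1.le⟩ ⟨hc0, hc1, hmem⟩)

/-- Proposition 6.2 of the paper. The real singularity exponent
`c_k(F,U)`, defined via integrability over `ℝⁿ` of
`(∑_{u∈F} e^{k⟨u,x⟩})^{−c/k} (∑_{u∈U} e^{k⟨u,x⟩})^{−(1−c)/k}`, equals
`sup {c ∈ (0,1) : 0 ∈ (1−c)·conv U + c·conv F}`
`= sup {c ∈ (0,1) : (−(c/(1−c))·conv F) ∩ conv U ≠ ∅} > 0`;
in particular it is independent of `k`. -/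
theorem singularity_exponent_eq_convex_threshold
    (n : ℕ) (F U : Finset (EuclideanSpace ℝ (Fin n))) (hF : F.Nonempty) (hU : U.Nonempty)
    (h0U : (0 : EuclideanSpace ℝ (Fin n)) ∈
      interior (convexHull ℝ (U : Set (EuclideanSpace ℝ (Fin n)))))
    (k : ℕ) (hk : 0 < k) :
    sSup {c : ℝ | 0 < c ∧ c < 1 ∧
        MeasureTheory.Integrable (fun x : EuclideanSpace ℝ (Fin n) =>
          (∑ u ∈ F, Real.exp ((k : ℝ) * ⟪u, x⟫)) ^ (-(c / (k : ℝ))) *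
          (∑ u ∈ U, Real.exp ((k : ℝ) * ⟪u, x⟫)) ^ (-((1 - c) / (k : ℝ))))} =
      sSup {c : ℝ | 0 < c ∧ c < 1 ∧
        (0 : EuclideanSpace ℝ (Fin n)) ∈
          (1 - c) • convexHull ℝ (U : Set (EuclideanSpace ℝ (Fin n))) +
            c • convexHull ℝ (F : Set (EuclideanSpace ℝ (Fin n)))} ∧
    sSup {c : ℝ | 0 < c ∧ c < 1 ∧
        (0 : EuclideanSpace ℝ (Fin n)) ∈
          (1 - c) • convexHull ℝ (U : Set (EuclideanSpace ℝ (Fin n))) +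
            c • convexHull ℝ (F : Set (EuclideanSpace ℝ (Fin n)))} =
      sSup {c : ℝ | 0 < c ∧ c < 1 ∧
        (((-(c / (1 - c))) • convexHull ℝ (F : Set (EuclideanSpace ℝ (Fin n)))) ∩
          convexHull ℝ (U : Set (EuclideanSpace ℝ (Fin n)))).Nonempty} ∧
    0 < sSup {c : ℝ | 0 < c ∧ c < 1 ∧
        MeasureTheory.Integrable (fun x : EuclideanSpace ℝ (Fin n) =>
          (∑ u ∈ F, Real.exp ((k : ℝ) * ⟪u, x⟫)) ^ (-(c / (k : ℝ))) *
          (∑ u ∈ U, Real.exp ((k : ℝ) * ⟪u, x⟫)) ^ (-((1 - c) / (k : ℝ))))} :=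
  singularity_exponent_eq_convex_threshold_general volume hF h0U (Nat.cast_pos.2 hk)
end

section
/- Let v₁,…,v_d ∈ ℤⁿ and let P := {y ∈ ℝⁿ : ⟨y, v_i⟩ ≥ −1 for all i = 1,…,d}; assume P is compact. Let H be a finite group of linear automorphisms of ℝⁿ preserving ℤⁿ and with h(P) = P for all h ∈ H, let π_H := (1/|H|) ∑_{h∈H} h, and let P^H := {y ∈ P : h(y) = y for all h ∈ H}. Then sup{c ∈ (0,1) : (−c/(1−c))•P^H ⊆ P} = min_{u ∈ extreme points of P^H} 1/(max_i ⟨u, v_i⟩ + 1) = min_{u ∈ π_H(extreme points of P)} 1/(max_i ⟨u, v_i⟩ + 1). -/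
open scoped RealInnerProductSpace Pointwise

/-- A point of `ℝⁿ` all of whose coordinates are integers, i.e. a point of `ℤⁿ`. -/
def IsLatticePt {n : ℕ} (x : EuclideanSpace ℝ (Fin n)) : Prop :=
  ∀ i, ∃ m : ℤ, x i = m

/-!
Since `P` is closed and convex, `(-t) • S ⊆ P` depends only on the closed convex hull of `S`. The
averaging map is a linear projection sending `P` onto `P^H`, so it sends `Ver P` into `P^H`, and
every vertex of `P^H` is the image of a vertex of `P`. By Krein–Milman, `Ver P^H` and `π_H(Ver P)`
therefore both have closed convex hull `P^H`. For a single point `u` and `c ∈ (0, 1)`,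
`-(c / (1 - c)) • u ∈ P` says `c / (1 - c) * maxᵢ ⟨u, vᵢ⟩ ≤ 1`, that is
`c ≤ 1 / (maxᵢ ⟨u, vᵢ⟩ + 1)`; the maximum is nonnegative because `P` is bounded.
-/

theorem sSup_pos_lt_one_le {a : ℝ} (ha₀ : 0 ≤ a) (ha₁ : a ≤ 1) :
    sSup {c : ℝ | 0 < c ∧ c < 1 ∧ c ≤ a} = a := by
  obtain rfl | hlt := ha₁.eq_or_lt
  · have : {c : ℝ | 0 < c ∧ c < 1 ∧ c ≤ 1} = Set.Ioo 0 1 := by grind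
    rw [this, csSup_Ioo zero_lt_one]
  · have : {c : ℝ | 0 < c ∧ c < 1 ∧ c ≤ a} = Set.Ioc 0 a := by grind
    rw [this]
    obtain rfl | hpos := ha₀.eq_or_lt
    · simp
    · exact csSup_Ioc hpos

section ConvexHull

variable {E : Type*} [AddCommGroup E] [Module ℝ E]

/-- The convex-geometric alpha-invariant of `K` relative to `P`: the supremum of the `c ∈ (0, 1)`
for which `-(c / (1 - c)) • K` stays inside `P`. It is `0` if there is no such `c`. -/
noncomputable def alphaInvariant (P K : Set E) : ℝ :=
  sSup {c : ℝ | 0 < c ∧ c < 1 ∧ (-(c / (1 - c))) • K ⊆ P}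

variable [TopologicalSpace E]

theorem smul_closedConvexHull_subset_iff [ContinuousConstSMul ℝ E] {P S : Set E}
    (hconv : Convex ℝ P) (hclosed : IsClosed P) (a : ℝ) :
    a • closedConvexHull ℝ S ⊆ P ↔ a • S ⊆ P := by
  refine ⟨(Set.smul_set_mono subset_closedConvexHull).trans, fun h => ?_⟩
  exact Set.image_subset_iff.2 <| closedConvexHull_min (Set.image_subset_iff.1 h)
    (hconv.smul_preimage a) (hclosed.preimage (continuous_const_smul a))

theorem alphaInvariant_closedConvexHull [ContinuousConstSMul ℝ E] {P : Set E}
    (hconv : Convex ℝ P) (hclosed : IsClosed P) (S : Set E) :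
    alphaInvariant P (closedConvexHull ℝ S) = alphaInvariant P S := by
  simp only [alphaInvariant, smul_closedConvexHull_subset_iff hconv hclosed]

theorem closedConvexHull_eq_of_extremePoints_subset [T2Space E] [IsTopologicalAddGroup E]
    [ContinuousSMul ℝ E] [LocallyConvexSpace ℝ E] {K S : Set E} (hcomp : IsCompact K)
    (hconv : Convex ℝ K) (hext : K.extremePoints ℝ ⊆ S) (hS : S ⊆ K) :
    closedConvexHull ℝ S = K := by
  refine (closedConvexHull_min hS hconv hcomp.isClosed).antisymm ?_
  calc
    K = closedConvexHull ℝ (K.extremePoints ℝ) := by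
      rw [closedConvexHull_eq_closure_convexHull, closure_convexHull_extremePoints hcomp hconv]
    _ ⊆ closedConvexHull ℝ S := (closedConvexHull ℝ).monotone hext

end ConvexHull

section Average

variable {k G E : Type*} [Group G] [Fintype G] [AddCommGroup E]

theorem averageMap_apply [CommRing k] [Invertible (Fintype.card G : k)] [Module k E]
    (ρ : Representation k G E) (x : E) :
    ρ.averageMap x = ⅟(Fintype.card G : k) • ∑ g, ρ g x := by
  simp [GroupAlgebra.average]

variable [Field k] [LinearOrder k] [IsStrictOrderedRing k] [Module k E]
  {ρ : Representation k G E} {K : Set E}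

theorem averageMap_mem (hconv : Convex k K) (hinv : ∀ g, Set.MapsTo (ρ g) K K) {x : E}
    (hx : x ∈ K) : ρ.averageMap x ∈ K := by
  rw [averageMap_apply, invOf_eq_inv, Finset.smul_sum]
  refine hconv.sum_mem (fun _ _ => by positivity) ?_ fun g _ => hinv g hx
  simp

theorem averageMap_image_eq_inter_invariants (hconv : Convex k K)
    (hinv : ∀ g, Set.MapsTo (ρ g) K K) : ρ.averageMap '' K = K ∩ ρ.invariants := by
  refine Set.Subset.antisymm ?_ fun x hx => ⟨x, hx.1, ρ.averageMap_id x hx.2⟩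
  rintro _ ⟨x, hx, rfl⟩
  exact ⟨averageMap_mem hconv hinv hx, ρ.averageMap_invariant x⟩

end Average

section DualPolytope

variable {E ι : Type*} [AddCommGroup E] [Module ℝ E] [TopologicalSpace E] {ℓ : ι → StrongDual ℝ E}

/-- The dual polytope `{y | ℓᵢ y ≥ -1 for all i}` of a family of continuous linear functionals. -/
def dualPolytope (ℓ : ι → StrongDual ℝ E) : Set E :=
  {y | ∀ i, -1 ≤ ℓ i y}

theorem convex_dualPolytope : Convex ℝ (dualPolytope ℓ) := by
  simp only [dualPolytope, Set.ofPred_forall]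
  exact convex_iInter fun i => convex_halfSpace_ge (ℓ i).isLinear _

theorem isClosed_dualPolytope : IsClosed (dualPolytope ℓ) := by
  simp only [dualPolytope, Set.ofPred_forall]
  exact isClosed_iInter fun i => isClosed_le continuous_const (ℓ i).continuous

theorem zero_mem_dualPolytope : 0 ∈ dualPolytope ℓ := fun i => by
  simp

variable [Fintype ι] [Nonempty ι]

/-- The largest value `maxᵢ ℓᵢ u` of a finite family of functionals at `u`. -/
noncomputable def maxValue (ℓ : ι → StrongDual ℝ E) (u : E) : ℝ :=
  Finset.univ.sup' Finset.univ_nonempty fun i => ℓ i u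

theorem neg_smul_mem_dualPolytope_iff {t : ℝ} (ht : 0 ≤ t) (u : E) :
    (-t) • u ∈ dualPolytope ℓ ↔ t * maxValue ℓ u ≤ 1 := by
  obtain rfl | ht := ht.eq_or_lt
  · simp [zero_mem_dualPolytope]
  · simp [dualPolytope, maxValue, ← le_div_iff₀' ht]

theorem maxValue_nonneg (hP : IsCompact (dualPolytope ℓ)) (u : E) : 0 ≤ maxValue ℓ u := by
  by_contra! hneg
  -- If every `ℓ j u` is negative, the ray spanned by `-u` lies in the polytope, but `ℓ i` is
  -- unbounded on it.
  let i : ι := Classical.arbitrary ι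
  have hi : 0 < -ℓ i u := by
    have : ℓ i u ≤ maxValue ℓ u := Finset.le_sup' (fun j => ℓ j u) (Finset.mem_univ i)
    linarith
  obtain ⟨B, hB⟩ := hP.bddAbove_image (ℓ i).continuous.continuousOn
  obtain ⟨m, hm⟩ := Archimedean.arch B hi
  have hray (m : ℕ) : (-(m : ℝ)) • u ∈ dualPolytope ℓ :=
    (neg_smul_mem_dualPolytope_iff m.cast_nonneg u).2 <|
      (mul_nonpos_of_nonneg_of_nonpos m.cast_nonneg hneg.le).trans zero_le_one
  have hbound : ℓ i ((-((m + 1 : ℕ) : ℝ)) • u) ≤ B := hB ⟨_, hray _, rfl⟩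
  simp only [map_smul, smul_eq_mul, nsmul_eq_mul, Nat.cast_add, Nat.cast_one] at hbound hm
  linarith

theorem neg_div_one_sub_smul_mem_dualPolytope_iff {c : ℝ} (hc₀ : 0 ≤ c) (hc₁ : c < 1) {u : E}
    (hu : 0 ≤ maxValue ℓ u) :
    (-(c / (1 - c))) • u ∈ dualPolytope ℓ ↔ c ≤ 1 / (maxValue ℓ u + 1) := by
  have hc : 0 < 1 - c := sub_pos.2 hc₁
  calc
    (-(c / (1 - c))) • u ∈ dualPolytope ℓ ↔ c / (1 - c) * maxValue ℓ u ≤ 1 :=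
      neg_smul_mem_dualPolytope_iff (by positivity) u
    _ ↔ c * maxValue ℓ u ≤ 1 - c := by rw [div_mul_eq_mul_div, div_le_one hc]
    _ ↔ c * (maxValue ℓ u + 1) ≤ 1 := by rw [mul_add_one, le_sub_iff_add_le]
    _ ↔ c ≤ 1 / (maxValue ℓ u + 1) := (le_div_iff₀ (by positivity)).symm

theorem alphaInvariant_dualPolytope (hP : IsCompact (dualPolytope ℓ)) {S : Set E}
    (hS : S.Nonempty) :
    alphaInvariant (dualPolytope ℓ) S = sInf ((fun u => 1 / (maxValue ℓ u + 1)) '' S) := by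
  set f : E → ℝ := fun u => 1 / (maxValue ℓ u + 1)
  have hM (u : E) : 0 ≤ maxValue ℓ u := maxValue_nonneg hP u
  have hf_nonneg (u : E) : 0 ≤ f u := one_div_nonneg.2 (add_nonneg (hM u) zero_le_one)
  have hf_le_one (u : E) : f u ≤ 1 :=
    div_le_one_of_le₀ (le_add_of_nonneg_left (hM u)) (add_nonneg (hM u) zero_le_one)
  have hbdd : BddBelow (f '' S) := ⟨0, Set.forall_mem_image.2 fun u _ => hf_nonneg u⟩
  have hInf_nonneg : 0 ≤ sInf (f '' S) :=
    Real.sInf_nonneg (Set.forall_mem_image.2 fun u _ => hf_nonneg u)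
  have hInf_le_one : sInf (f '' S) ≤ 1 :=
    let ⟨u, hu⟩ := hS
    (csInf_le hbdd ⟨u, hu, rfl⟩).trans (hf_le_one u)
  rw [alphaInvariant, ← sSup_pos_lt_one_le hInf_nonneg hInf_le_one]
  congr! 2
  ext c
  refine and_congr_right fun hc₀ => and_congr_right fun hc₁ => ?_
  calc
    (-(c / (1 - c))) • S ⊆ dualPolytope ℓ
        ↔ ∀ u ∈ S, (-(c / (1 - c))) • u ∈ dualPolytope ℓ := Set.image_subset_iff
    _ ↔ ∀ u ∈ S, c ≤ f u := forall₂_congr fun u _ =>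
      neg_div_one_sub_smul_mem_dualPolytope_iff hc₀.le hc₁ (hM u)
    _ ↔ c ≤ sInf (f '' S) := by rw [le_csInf_iff hbdd (hS.image f), Set.forall_mem_image]

variable [T2Space E] [IsTopologicalAddGroup E] [ContinuousSMul ℝ E] [LocallyConvexSpace ℝ E]

theorem alphaInvariant_dualPolytope_of_extremePoints_subset (hP : IsCompact (dualPolytope ℓ))
    {K S : Set E} (hcomp : IsCompact K) (hconv : Convex ℝ K) (hne : K.Nonempty)
    (hext : K.extremePoints ℝ ⊆ S) (hS : S ⊆ K) :
    alphaInvariant (dualPolytope ℓ) K = sInf ((fun u => 1 / (maxValue ℓ u + 1)) '' S) := by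
  rw [← closedConvexHull_eq_of_extremePoints_subset hcomp hconv hext hS,
    alphaInvariant_closedConvexHull convex_dualPolytope isClosed_dualPolytope,
    alphaInvariant_dualPolytope hP ((hcomp.extremePoints_nonempty hne).mono hext)]

theorem tian_stabilization_convex_general {P : Set E} (hP : P = dualPolytope ℓ) (hPc : IsCompact P)
    {G : Type*} [Group G] [Fintype G] (ρ : Representation ℝ G E) (hρ : ∀ g, Continuous (ρ g))
    (hinv : ∀ g, Set.MapsTo (ρ g) P P) {piG : E → E}
    (hpiG : ∀ x, piG x = (Fintype.card G : ℝ)⁻¹ • ∑ g, ρ g x) {PG : Set E}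
    (hPG : PG = {y ∈ P | ∀ g, ρ g y = y}) :
    alphaInvariant P PG =
      sInf ((fun u => 1 / (maxValue ℓ u + 1)) '' (PG.extremePoints ℝ)) ∧
    sInf ((fun u => 1 / (maxValue ℓ u + 1)) '' (PG.extremePoints ℝ)) =
      sInf ((fun u => 1 / (maxValue ℓ u + 1)) '' (piG '' (P.extremePoints ℝ))) := by
  subst hP
  have hcont : Continuous piG := by
    rw [funext hpiG]
    fun_prop
  obtain rfl : piG = ρ.averageMap := by
    funext x
    rw [hpiG, averageMap_apply, invOf_eq_inv]
  obtain rfl : PG = ρ.averageMap '' dualPolytope ℓ :=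
    hPG.trans (averageMap_image_eq_inter_invariants convex_dualPolytope hinv).symm
  let π : E →L[ℝ] E := ⟨ρ.averageMap, hcont⟩
  have halpha {S : Set E} := alphaInvariant_dualPolytope_of_extremePoints_subset hPc (S := S)
    (hPc.image hcont) (convex_dualPolytope.linear_image ρ.averageMap)
    (Set.Nonempty.image _ ⟨0, zero_mem_dualPolytope⟩)
  have hvertices := halpha subset_rfl extremePoints_subset
  have hprojected := halpha (surjOn_extremePoints_image π.toContinuousAffineMap hPc)
    (Set.image_mono extremePoints_subset)
  exact ⟨hvertices, hvertices.symm.trans hprojected⟩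

end DualPolytope

/-- the convex-geometric content of the paper's main Theorem 1.3 on
Tian's stabilization problem. For the compact polytope
`P = {y : ⟨y, vᵢ⟩ ≥ −1 ∀ i}` with `vᵢ ∈ ℤⁿ`, an `H`-action as indicated, the
averaging map `π_H` and the fixed-point set `P^H`:
`sup {c ∈ (0,1) : (−c/(1−c))•P^H ⊆ P}`
`= min_{u ∈ Ver P^H} 1/(maxᵢ ⟨u, vᵢ⟩ + 1) = min_{u ∈ π_H(Ver P)} 1/(maxᵢ ⟨u, vᵢ⟩ + 1)`. -/
theorem tian_stabilization_convex
    (n d : ℕ) (hd : 0 < d) (v : Fin d → EuclideanSpace ℝ (Fin n))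
    (hv : ∀ i, IsLatticePt (v i))
    (P : Set (EuclideanSpace ℝ (Fin n)))
    (hP : P = {y | ∀ i, -1 ≤ ⟪y, v i⟫}) (hPc : IsCompact P)
    (H : Subgroup (EuclideanSpace ℝ (Fin n) ≃ₗ[ℝ] EuclideanSpace ℝ (Fin n)))
    [Fintype H]
    (hlat : ∀ h ∈ H, ∀ x : EuclideanSpace ℝ (Fin n), IsLatticePt x → IsLatticePt (h x))
    (hinv : ∀ h ∈ H, h '' P = P)
    (piH : EuclideanSpace ℝ (Fin n) → EuclideanSpace ℝ (Fin n))
    (hpiH : ∀ x, piH x = (Fintype.card H : ℝ)⁻¹ •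
      ∑ h : H, (h : EuclideanSpace ℝ (Fin n) ≃ₗ[ℝ] EuclideanSpace ℝ (Fin n)) x)
    (PH : Set (EuclideanSpace ℝ (Fin n)))
    (hPH : PH = {y ∈ P | ∀ h ∈ H, h y = y}) :
    sSup {c : ℝ | 0 < c ∧ c < 1 ∧ (-(c / (1 - c))) • PH ⊆ P} =
      sInf ((fun u => 1 / ((Finset.univ.sup' (Finset.univ_nonempty_iff.mpr ⟨⟨0, hd⟩⟩)
        fun i => ⟪u, v i⟫) + 1)) '' (PH.extremePoints ℝ)) ∧
    sInf ((fun u => 1 / ((Finset.univ.sup' (Finset.univ_nonempty_iff.mpr ⟨⟨0, hd⟩⟩)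
        fun i => ⟪u, v i⟫) + 1)) '' (PH.extremePoints ℝ)) =
      sInf ((fun u => 1 / ((Finset.univ.sup' (Finset.univ_nonempty_iff.mpr ⟨⟨0, hd⟩⟩)
        fun i => ⟪u, v i⟫) + 1)) '' (piH '' (P.extremePoints ℝ))) := by
  have : Nonempty (Fin d) := ⟨⟨0, hd⟩⟩
  exact tian_stabilization_convex_general (ℓ := fun i => innerSLFlip ℝ (v i)) hP hPc
    (Representation.ofDistribMulAction ℝ H _) (fun _ => LinearMap.continuous_of_finiteDimensional _)
    (fun h => Set.mapsTo_iff_image_subset.2 (hinv h h.2).subset) hpiH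
    (by simpa [Subgroup.smul_def] using hPH)
end

section
/- Let P ⊂ ℝⁿ be a compact convex set with 0 in its interior, and let F ⊂ ℝⁿ be a nonempty finite set. Then sup{c ∈ (0,1) : P ∩ ((−c/(1−c))•conv F) ≠ ∅} = 1/(1 + min_{x ∈ conv F} ‖x‖_{−P}). -/
open scoped RealInnerProductSpace Pointwise

/-!
Write `C` for `conv F` and put `r = (1 - c) / c`, so that `c = 1 / (1 + r)` and `c ∈ (0, 1)`
corresponds to `r > 0`. Then `P` meets `-(c / (1 - c)) • C` exactly when `C` meets `r • -P`. The
infimum of the `r > 0` with this property is the infimum over `C` of the gauge of `-P`, and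
`r ↦ 1 / (1 + r)` is antitone and continuous on `[0, ∞)`, so it turns this infimum into the
required supremum.
-/

theorem absorbent_neg {M E : Type*} [Monoid M] [Bornology M] [AddGroup E] [DistribMulAction M E]
    {s : Set E} (hs : Absorbent M s) : Absorbent M (-s) := fun x => by
  simpa only [Set.neg_singleton, neg_neg] using (hs (-x)).neg_neg

section Gauge

variable {E : Type*} [AddCommGroup E] [Module ℝ E] {s C : Set E}

theorem sInf_nonneg_mem_smul_eq_gauge (hs : Absorbent ℝ s) (x : E) :
    sInf {t : ℝ | 0 ≤ t ∧ x ∈ t • s} = gauge s x := by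
  have pos_subset_nonneg : {t : ℝ | 0 < t ∧ x ∈ t • s} ⊆ {t : ℝ | 0 ≤ t ∧ x ∈ t • s} :=
    fun _ ht => ⟨ht.1.le, ht.2⟩
  apply le_antisymm
  · exact csInf_le_csInf ⟨0, fun _ ht => ht.1⟩ hs.gauge_set_nonempty pos_subset_nonneg
  · exact le_csInf (hs.gauge_set_nonempty.mono pos_subset_nonneg)
      fun _ ht => gauge_le_of_mem ht.1 ht.2

theorem isGLB_gauge (hs : Absorbent ℝ s) (x : E) :
    IsGLB {r : ℝ | 0 < r ∧ x ∈ r • s} (gauge s x) :=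
  isGLB_csInf hs.gauge_set_nonempty ⟨0, fun _ hr => hr.1.le⟩

theorem nonempty_setOf_pos_inter_smul_nonempty (hs : Absorbent ℝ s) (hC : C.Nonempty) :
    {r : ℝ | 0 < r ∧ (C ∩ r • s).Nonempty}.Nonempty := by
  obtain ⟨x, hx⟩ := hC
  obtain ⟨r, hr, hxr⟩ := hs.gauge_set_nonempty (x := x)
  exact ⟨r, hr, x, hx, hxr⟩

theorem sInf_pos_inter_smul_nonempty_eq_sInf_gauge (hs : Absorbent ℝ s) (hC : C.Nonempty) :
    sInf {r : ℝ | 0 < r ∧ (C ∩ r • s).Nonempty} = sInf (gauge s '' C) := by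
  have scales_eq_iUnion : {r : ℝ | 0 < r ∧ (C ∩ r • s).Nonempty} =
      ⋃ x : C, {r : ℝ | 0 < r ∧ (x : E) ∈ r • s} := by
    ext r
    simp [Set.Nonempty]
  have isGLB_image : IsGLB (gauge s '' C) (sInf (gauge s '' C)) :=
    isGLB_csInf (hC.image _) ⟨0, Set.forall_mem_image.2 fun x _ => gauge_nonneg x⟩
  have isGLB_scales : IsGLB {r : ℝ | 0 < r ∧ (C ∩ r • s).Nonempty} (sInf (gauge s '' C)) := by
    rwa [scales_eq_iUnion, ← isGLB_iUnion_iff_of_isGLB fun x : C => isGLB_gauge hs x,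
      ← Set.image_eq_range]
  exact isGLB_scales.csInf_eq (nonempty_setOf_pos_inter_smul_nonempty hs hC)

end Gauge

theorem inter_neg_smul_nonempty_iff {K E : Type*} [DivisionRing K] [AddCommGroup E] [Module K E]
    {P C : Set E} {a : K} (ha : a ≠ 0) :
    (P ∩ (-a) • C).Nonempty ↔ (C ∩ a⁻¹ • -P).Nonempty := by
  have mem_iff (x : E) : x ∈ a⁻¹ • -P ↔ (-a) • x ∈ P := by
    rw [Set.mem_inv_smul_set_iff₀ ha, Set.mem_neg, neg_smul]
  constructor
  · rintro ⟨_, hP, x, hx, rfl⟩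
    exact ⟨x, hx, (mem_iff x).2 hP⟩
  · rintro ⟨x, hx, hxP⟩
    exact ⟨(-a) • x, (mem_iff x).1 hxP, Set.smul_mem_smul_set hx⟩

theorem setOf_inv_div_one_sub_mem_eq_image {R : Set ℝ} (hR : R ⊆ Set.Ioi 0) :
    {c : ℝ | 0 < c ∧ c < 1 ∧ (c / (1 - c))⁻¹ ∈ R} = (fun r => 1 / (1 + r)) '' R := by
  ext c
  constructor
  · rintro ⟨hc0, -, hcR⟩
    refine ⟨_, hcR, ?_⟩
    simp only [inv_div]
    field_simp
    ring
  · rintro ⟨r, hr, rfl⟩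
    have hr0 : 0 < r := hR hr
    have inv_eq : (1 / (1 + r) / (1 - 1 / (1 + r)))⁻¹ = r := by
      field_simp
      ring
    refine ⟨by positivity, ?_, inv_eq.symm ▸ hr⟩
    rw [div_lt_one (by positivity)]
    linarith

theorem sSup_image_one_div_one_add {R : Set ℝ} (hR : R ⊆ Set.Ici 0) (hne : R.Nonempty) :
    sSup ((fun r => 1 / (1 + r)) '' R) = 1 / (1 + sInf R) := by
  have sInf_nonneg : 0 ≤ sInf R := Real.sInf_nonneg hR
  have antitone : AntitoneOn (fun r : ℝ => 1 / (1 + r)) R := fun a ha b _ hab => by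
    have ha0 : 0 ≤ a := hR ha
    dsimp only
    gcongr
  have continuousAt : ContinuousAt (fun r : ℝ => 1 / (1 + r)) (sInf R) := by
    have : 1 + sInf R ≠ 0 := by positivity
    fun_prop (disch := assumption)
  exact (antitone.map_csInf_of_continuousWithinAt continuousAt.continuousWithinAt hne ⟨0, hR⟩).symm

theorem sup_dilation_eq_inv_one_add_min_gauge_general {E : Type*} [AddCommGroup E] [Module ℝ E]
    {P C : Set E} (hP : Absorbent ℝ P) (hC : C.Nonempty) :
    sSup {c : ℝ | 0 < c ∧ c < 1 ∧ (P ∩ (-(c / (1 - c))) • C).Nonempty} =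
      1 / (1 + sInf (gauge (-P) '' C)) := by
  set R : Set ℝ := {r | 0 < r ∧ (C ∩ r • -P).Nonempty}
  have dilations_eq : {c : ℝ | 0 < c ∧ c < 1 ∧ (P ∩ (-(c / (1 - c))) • C).Nonempty} =
      {c : ℝ | 0 < c ∧ c < 1 ∧ (c / (1 - c))⁻¹ ∈ R} := by
    ext c
    refine and_congr_right fun hc0 => and_congr_right fun hc1 => ?_
    have ratio_pos : 0 < c / (1 - c) := div_pos hc0 (sub_pos.2 hc1)
    rw [inter_neg_smul_nonempty_iff ratio_pos.ne']
    exact (and_iff_right (inv_pos.2 ratio_pos)).symm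
  rw [dilations_eq, setOf_inv_div_one_sub_mem_eq_image fun _ hr => hr.1,
    sSup_image_one_div_one_add (fun _ hr => hr.1.le)
      (nonempty_setOf_pos_inter_smul_nonempty (absorbent_neg hP) hC),
    sInf_pos_inter_smul_nonempty_eq_sInf_gauge (absorbent_neg hP) hC]

/-- Corollary 7.5 of the paper. For a compact convex `P` with
`0 ∈ int P` and a nonempty finite set `F`,
`sup {c ∈ (0,1) : P ∩ ((−c/(1−c))·conv F) ≠ ∅} = 1/(1 + min_{conv F} ‖·‖_{−P})`,
where `‖x‖_{−P} = inf {t ≥ 0 : x ∈ t•(−P)}` is the gauge of `−P`. -/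
theorem sup_dilation_eq_inv_one_add_min_gauge
    (n : ℕ) (P : Set (EuclideanSpace ℝ (Fin n)))
    (hPc : IsCompact P) (hPconv : Convex ℝ P)
    (h0 : (0 : EuclideanSpace ℝ (Fin n)) ∈ interior P)
    (F : Finset (EuclideanSpace ℝ (Fin n))) (hF : F.Nonempty) :
    sSup {c : ℝ | 0 < c ∧ c < 1 ∧
        (P ∩ ((-(c / (1 - c))) •
          convexHull ℝ (F : Set (EuclideanSpace ℝ (Fin n))))).Nonempty} =
      1 / (1 + sInf ((fun x => sInf {t : ℝ | 0 ≤ t ∧ x ∈ t • (-P)}) ''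
        convexHull ℝ (F : Set (EuclideanSpace ℝ (Fin n))))) := by
  have hP : Absorbent ℝ P := absorbent_nhds_zero (mem_interior_iff_mem_nhds.1 h0)
  simpa only [sInf_nonneg_mem_smul_eq_gauge (absorbent_neg hP)] using
    sup_dilation_eq_inv_one_add_min_gauge_general hP hF.to_set.convexHull
end

section
/- Let P ⊂ ℝⁿ be the convex hull of a finite subset of ℤⁿ with 0 in its interior, and suppose that every point of P at which ‖·‖_{−P} attains its maximum over P is an extreme point of P (condition (∗_P)). Then for every k ≥ 1 and every m with 2 ≤ m ≤ |P ∩ (1/k)ℤⁿ|, one has max over subsets F ⊆ P ∩ (1/k)ℤⁿ with |F| = m of (min_{x ∈ conv F} ‖x‖_{−P}) < max_{x∈P} ‖x‖_{−P}. -/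
open scoped RealInnerProductSpace Pointwise

/-- The gauge (near-norm) `‖x‖₋P = inf {t ≥ 0 : x ∈ t•(−P)}` of the reflected body `−P`. -/
noncomputable def gaugeNeg {n : ℕ} (P : Set (EuclideanSpace ℝ (Fin n)))
    (x : EuclideanSpace ℝ (Fin n)) : ℝ :=
  sInf {t : ℝ | 0 ≤ t ∧ x ∈ t • (-P)}

/-- The rescaled lattice `(1/k)ℤⁿ = {u/k : u ∈ ℤⁿ}`. -/
def latticeDiv (n k : ℕ) : Set (EuclideanSpace ℝ (Fin n)) :=
  {x | ∀ i, ∃ z : ℤ, x i = (z : ℝ) / k}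

/-- `β(k,m)`: the maximum, over subsets `F ⊆ P ∩ (1/k)ℤⁿ` with `|F| = m`, of
`min_{x ∈ conv F} ‖x‖₋P`. -/
noncomputable def betaKM {n : ℕ} (P : Set (EuclideanSpace ℝ (Fin n))) (k m : ℕ) : ℝ :=
  sSup {r : ℝ | ∃ F : Finset (EuclideanSpace ℝ (Fin n)),
    (F : Set (EuclideanSpace ℝ (Fin n))) ⊆ P ∩ latticeDiv n k ∧ F.card = m ∧
    r = sInf (gaugeNeg P '' (convexHull ℝ (F : Set (EuclideanSpace ℝ (Fin n)))))}

/-!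
Being finite, the family of `m`-point sets `F` has a member realising `β(k,m)`. As `F` has two
distinct points, `conv F` contains their midpoint, which is not an extreme point of `P` and so, by
(∗_P), does not maximise `‖·‖₋P`; hence the minimum over `conv F` is below `max_P ‖·‖₋P`.
-/

open Topology Bornology

theorem bddBelow_gauge_image {E : Type*} [AddCommGroup E] [Module ℝ E] (s t : Set E) :
    BddBelow (gauge s '' t) :=
  ⟨0, Set.forall_mem_image.2 fun x _ => gauge_nonneg x⟩

theorem bddAbove_gauge_image {E : Type*} [SeminormedAddCommGroup E] [NormedSpace ℝ E]
    {s t : Set E} (hs : s ∈ 𝓝 0) (ht : IsBounded t) : BddAbove (gauge s '' t) := by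
  obtain ⟨r, hr, hball⟩ := Metric.mem_nhds_iff.1 hs
  obtain ⟨R, hR⟩ := ht.exists_norm_le
  refine ⟨R / r, Set.forall_mem_image.2 fun x hx => (le_div_iff₀' hr).2 ?_⟩
  exact (mul_gauge_le_norm hball).trans (hR x hx)

theorem exists_mem_convexHull_notMem_extremePoints {𝕜 E : Type*} [Field 𝕜] [LinearOrder 𝕜]
    [IsStrictOrderedRing 𝕜] [AddCommGroup E] [Module 𝕜 E] {s F : Set E} (hFs : F ⊆ s)
    (hF : F.Nontrivial) : ∃ x ∈ convexHull 𝕜 F, x ∉ s.extremePoints 𝕜 := by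
  obtain ⟨a, ha, b, hb, hab⟩ := hF
  have hmid : midpoint 𝕜 a b ∈ segment 𝕜 a b := midpoint_mem_segment a b
  refine ⟨midpoint 𝕜 a b, segment_subset_convexHull ha hb hmid, fun hext => ?_⟩
  rcases (mem_extremePoints_iff_forall_segment.1 hext).2 a (hFs ha) b (hFs hb) hmid with h | h
  · exact hab ((left_eq_midpoint_iff 𝕜).1 h)
  · exact hab ((right_eq_midpoint_iff 𝕜).1 h)

theorem exists_finset_card_eq_sSup_eq {α β : Type*} [ConditionallyCompleteLinearOrder β]
    {A : Set α} {m : ℕ} (hA : A.Finite) (hm : m ≤ A.ncard) (g : Finset α → β) :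
    ∃ F : Finset α, (F : Set α) ⊆ A ∧ F.card = m ∧
      sSup {r | ∃ F : Finset α, (F : Set α) ⊆ A ∧ F.card = m ∧ r = g F} = g F := by
  have hne : {r | ∃ F : Finset α, (F : Set α) ⊆ A ∧ F.card = m ∧ r = g F}.Nonempty := by
    rw [Set.ncard_eq_toFinset_card A hA] at hm
    obtain ⟨F, hF, hcard⟩ := Finset.exists_subset_card_eq hm
    exact ⟨g F, F, hA.subset_toFinset.1 hF, hcard, rfl⟩
  refine hne.csSup_mem ((hA.toFinset.powerset.finite_toSet.image g).subset ?_)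
  rintro _ ⟨F, hF, -, rfl⟩
  exact ⟨F, Finset.mem_coe.2 (Finset.mem_powerset.2 (hA.subset_toFinset.2 hF)), rfl⟩

-- The two gauges differ only in admitting `t = 0`, which matters at `x = 0` alone.
theorem gaugeNeg_eq_gauge {n : ℕ} (P : Set (EuclideanSpace ℝ (Fin n))) :
    gaugeNeg P = gauge (-P) := by
  funext x
  obtain rfl | hx := eq_or_ne x 0
  · rw [gauge_zero]
    obtain rfl | hP := P.eq_empty_or_nonempty
    · simp only [gaugeNeg, Set.neg_empty, Set.smul_set_empty, Set.mem_empty_iff_false, and_false,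
        Set.ofPred_false, Real.sInf_empty]
    · have zero_mem : (0 : EuclideanSpace ℝ (Fin n)) ∈ (0 : ℝ) • (-P) :=
        (Set.zero_smul_set hP.neg).ge rfl
      exact le_antisymm (csInf_le ⟨0, fun _ ht => ht.1⟩ ⟨le_rfl, zero_mem⟩)
        (Real.sInf_nonneg fun _ ht => ht.1)
  · refine congrArg sInf (Set.ext fun t => and_congr_left fun hxt => ?_)
    refine ⟨fun ht => ht.lt_of_ne' ?_, le_of_lt⟩
    rintro rfl
    exact hx (Set.zero_smul_set_subset _ hxt)

theorem finite_inter_latticeDiv {n k : ℕ} {P : Set (EuclideanSpace ℝ (Fin n))}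
    (hP : IsBounded P) (hk : 0 < k) : (P ∩ latticeDiv n k).Finite := by
  have hk' : (k : ℝ) ≠ 0 := Nat.cast_ne_zero.2 hk.ne'
  let b := (EuclideanSpace.basisFun (Fin n) ℝ).toBasis
  have hfin : ((k : ℝ) • P ∩ Submodule.span ℤ (Set.range b)).Finite :=
    ZSpan.setFinite_inter b (hP.smul₀ (k : ℝ))
  refine (hfin.preimage (smul_right_injective _ hk').injOn).subset fun x hx => ?_
  refine ⟨Set.smul_mem_smul_set hx.1, (b.mem_span_iff_repr_mem ℤ _).2 fun i => ?_⟩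
  obtain ⟨z, hz⟩ := hx.2 i
  refine ⟨z, ?_⟩
  simp [b, hz, mul_div_cancel₀ _ hk']

theorem exists_finset_betaKM_eq {n k m : ℕ} {P : Set (EuclideanSpace ℝ (Fin n))}
    (hfin : (P ∩ latticeDiv n k).Finite) (hm : m ≤ (P ∩ latticeDiv n k).ncard) :
    ∃ F : Finset (EuclideanSpace ℝ (Fin n)),
      (F : Set (EuclideanSpace ℝ (Fin n))) ⊆ P ∩ latticeDiv n k ∧ F.card = m ∧
      betaKM P k m = sInf (gaugeNeg P '' convexHull ℝ (F : Set (EuclideanSpace ℝ (Fin n)))) :=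
  exists_finset_card_eq_sSup_eq hfin hm _

theorem betaKM_lt_max_of_starP_general {n : ℕ} {P : Set (EuclideanSpace ℝ (Fin n))}
    (hconv : Convex ℝ P) (hbdd : IsBounded P) (h0 : 0 ∈ interior P)
    (hstar : ∀ x ∈ P, (∀ y ∈ P, gaugeNeg P y ≤ gaugeNeg P x) → x ∈ P.extremePoints ℝ)
    {k m : ℕ} (hk : 0 < k) (hm2 : 2 ≤ m) (hmcard : m ≤ (P ∩ latticeDiv n k).ncard) :
    betaKM P k m < sSup (gaugeNeg P '' P) := by
  obtain ⟨F, hF, rfl, hβ⟩ := exists_finset_betaKM_eq (finite_inter_latticeDiv hbdd hk) hmcard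
  have hFP : (F : Set (EuclideanSpace ℝ (Fin n))) ⊆ P := hF.trans Set.inter_subset_left
  obtain ⟨x, hxF, hx⟩ := exists_mem_convexHull_notMem_extremePoints (𝕜 := ℝ) hFP
    (Finset.one_lt_card_iff_nontrivial.1 hm2)
  obtain ⟨y, hy, hxy⟩ : ∃ y ∈ P, gaugeNeg P x < gaugeNeg P y := by
    by_contra! hmax
    exact hx (hstar x (convexHull_min hFP hconv hxF) hmax)
  rw [gaugeNeg_eq_gauge] at hβ hxy ⊢
  have hnhds : -P ∈ 𝓝 0 := neg_mem_nhds_zero _ (mem_interior_iff_mem_nhds.1 h0)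
  calc betaKM P k F.card = sInf (gauge (-P) '' convexHull ℝ F) := hβ
    _ ≤ gauge (-P) x := csInf_le (bddBelow_gauge_image _ _) (Set.mem_image_of_mem _ hxF)
    _ < gauge (-P) y := hxy
    _ ≤ sSup (gauge (-P) '' P) :=
      le_csSup (bddAbove_gauge_image hnhds hbdd) (Set.mem_image_of_mem _ hy)

/-- cf. Theorem 1.6 of the paper, case where (∗_P) holds. If
`‖·‖₋P` attains its maximum over `P` only at extreme points of `P`, then for all
`k ≥ 1` and `2 ≤ m ≤ |P ∩ (1/k)ℤⁿ|`, one has `β(k,m) < max_P ‖·‖₋P`. -/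
theorem betaKM_lt_max_of_starP
    (n : ℕ) (T : Finset (EuclideanSpace ℝ (Fin n))) (hT : ∀ x ∈ T, IsLatticePt x)
    (P : Set (EuclideanSpace ℝ (Fin n)))
    (hP : P = convexHull ℝ (T : Set (EuclideanSpace ℝ (Fin n))))
    (h0 : (0 : EuclideanSpace ℝ (Fin n)) ∈ interior P)
    (hstar : ∀ x ∈ P, (∀ y ∈ P, gaugeNeg P y ≤ gaugeNeg P x) → x ∈ P.extremePoints ℝ)
    (k m : ℕ) (hk : 0 < k) (hm2 : 2 ≤ m)
    (hmcard : m ≤ (P ∩ latticeDiv n k).ncard) :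
    betaKM P k m < sSup (gaugeNeg P '' P) := by
  subst hP
  exact betaKM_lt_max_of_starP_general (convex_convexHull ℝ _)
    (isBounded_convexHull.2 T.finite_toSet.isBounded) h0 hstar hk hm2 hmcard
end
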